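/- For all integers a, b with 1 ≤ a ≤ 10, b > a, and gcd(a,b) = 1, the number π*(a,b) of primes not representable as au + bv with u, v nonnegative integers satisfies π*(a,b) ≥ (1/2) · π(S(a,b)), where S(a,b) = ab − a − b; moreover, equality holds if and only if a = 1, or (a,b) = (2,3), or (a,b) = (2,5), or (a,b) = (3,5). -/

import Mathlib

/-- `piStar a b` is the number of primes not representable as `a*u + b*v`
with `u, v` nonnegative integers, i.e. the number of primes not in the
numerical semigroup `⟨a, b⟩`. -/
noncomputable def piStar (a b : ℕ) : ℕ :=
  Set.ncard {p : ℕ | p.Prime ∧ ¬ ∃ u v : ℕ, p = a * u + b * v}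

/-- `S a b = a*b - a - b` (the Frobenius-type quantity).
Note that for `a = 1` this truncated subtraction gives `S 1 b = 0`, and
`π(0) = 0`, which agrees with the convention `π(S(1,b)) = π(-1) = 0`. -/
def S (a b : ℕ) : ℕ := a * b - a - b

/-!
For coprime `a` and `b`, a number `n` is a gap of `⟨a, b⟩` exactly when `n ≡ b * v` modulo `a` and
`n < b * v` for some `v < a`. By the symmetry `n ↦ S a b - n` half of the numbers up to `S a b` are
gaps, and small numbers are more likely to be gaps than large ones, so that the gaps have their full
share of the primes and more. Making this explicit for `3 ≤ a` takes two ranges of `b`.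

For large `b`, Chebyshev's method is carried out in residue classes: if integers `c_k` satisfy
`∑ c_k / k = 0` and `∑ c_k #{m ≤ n | k ∣ m, m ≡ n [MOD q]} ≤ σ * [n ≡ 1 [MOD q]] + h n` for all `n`
coprime to `q`, where `h` is a step function, then summing `Λ` against this inequality bounds
`σ * ψ(x; q, r)` from below, up to values `ψ(y)` with `y < x`, which are bounded by `27 / 25 * y`.
Since the counts are nearly linear in `n`, only finitely many `n` have to be checked. Partial
summation turns the bounds for `ψ` into the comparison of the numbers of primes.

For `b` up to `3 * 2 ^ 17` the primes are found by a sieve, and the values of `b` are grouped into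
blocks in which both sides vary little.
-/

open Finset Real

section LogSums

/-- The antiderivative `z log z - z` of the logarithm, the main term of Stirling's formula. -/
noncomputable def logPrimitive (z : ℝ) : ℝ := z * log z - z

lemma logPrimitive_add_mul_log_le {w z : ℝ} (hw : 0 < w) (hz : 0 < z) :
    logPrimitive z + (w - z) * log z ≤ logPrimitive w := by
  have h : w * log (z / w) ≤ w * (z / w - 1) :=
    mul_le_mul_of_nonneg_left (log_le_sub_one_of_pos (by positivity)) hw.le
  rw [log_div hz.ne' hw.ne', mul_sub, mul_sub, mul_div_cancel₀ _ hw.ne'] at h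
  unfold logPrimitive
  linarith

lemma neg_one_le_logPrimitive {z : ℝ} (hz : 0 < z) : -1 ≤ logPrimitive z := by
  simpa [logPrimitive] using logPrimitive_add_mul_log_le hz one_pos

variable {q l : ℕ}

lemma mul_sum_log_progression_le (hl : 0 < l) (j : ℕ) :
    q * ∑ i ∈ range (j + 1), log (l + q * i) ≤
      logPrimitive (l + q * j) - logPrimitive l + q * log (l + q * j) := by
  induction j with
  | zero => simp
  | succ j ih =>
    have h := logPrimitive_add_mul_log_le (w := l + q * (j + 1)) (z := l + q * j)
      (by positivity) (by positivity)
    rw [sum_range_succ]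
    push_cast
    linarith

lemma le_mul_sum_log_progression (hl : 0 < l) (j : ℕ) :
    logPrimitive (l + q * j) - logPrimitive l + q * log l ≤
      q * ∑ i ∈ range (j + 1), log (l + q * i) := by
  induction j with
  | zero => simp
  | succ j ih =>
    have h := logPrimitive_add_mul_log_le (w := l + q * j) (z := l + q * (j + 1))
      (by positivity) (by positivity)
    rw [sum_range_succ]
    push_cast
    linarith

lemma filter_modEq_Icc_eq_image (hl : 0 < l) (hlq : l ≤ q) {M : ℕ} (hM : l ≤ M) :
    {m ∈ Icc 1 M | m ≡ l [MOD q]} = (range ((M - l) / q + 1)).image (fun i => l + q * i) := by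
  ext m
  simp only [mem_filter, mem_Icc, mem_image, mem_range, Nat.lt_succ_iff,
    Nat.le_div_iff_mul_le (hl.trans_le hlq)]
  constructor
  · rintro ⟨⟨hm, hmM⟩, hml⟩
    have hlm : l ≤ m := Nat.ModEq.le_of_lt_add hml.symm (by omega)
    obtain ⟨i, hi⟩ := (Nat.modEq_iff_dvd' hlm).1 hml.symm
    exact ⟨i, by rw [mul_comm, ← hi]; omega, by omega⟩
  · rintro ⟨i, hi, rfl⟩
    exact ⟨by rw [mul_comm] at hi; omega, by simp [Nat.ModEq]⟩

lemma exists_modEq_pos_le (hq : 0 < q) (r : ℕ) : ∃ l, 0 < l ∧ l ≤ q ∧ r ≡ l [MOD q] := by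
  rcases Nat.eq_zero_or_pos (r % q) with h | h
  · exact ⟨q, hq, le_rfl, by simp [Nat.ModEq, h]⟩
  · exact ⟨r % q, h, (Nat.mod_lt _ hq).le, (Nat.mod_modEq r q).symm⟩

lemma abs_logPrimitive_le {x z : ℝ} (hz : 0 < z) (hzq : z ≤ q) (hzx : z ≤ x) (hx : 1 ≤ x) :
    |logPrimitive z| ≤ q * log x + 1 := by
  have hlogx := log_nonneg hx
  have hlow := neg_one_le_logPrimitive hz
  have hup : z * log z ≤ q * log x :=
    (mul_le_mul_of_nonneg_left (log_le_log hz hzx) hz.le).trans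
      (mul_le_mul_of_nonneg_right hzq hlogx)
  have hnonneg : 0 ≤ q * log x := by positivity
  rw [abs_le]
  unfold logPrimitive at hlow ⊢
  constructor <;> linarith

lemma abs_mul_sum_log_progression_sub_le (hl : 0 < l) (hlq : l ≤ q) {j : ℕ} {x z : ℝ}
    (hjz : l + q * j ≤ z) (hzj : z ≤ l + q * j + q) (hzx : z ≤ x) :
    |q * ∑ i ∈ range (j + 1), log (l + q * i) - logPrimitive z| ≤ q * log x + 1 := by
  have hup := mul_sum_log_progression_le (q := q) hl j
  have hlow := le_mul_sum_log_progression (q := q) hl j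
  have hl' : (1 : ℝ) ≤ l := by exact_mod_cast hl
  have hn : (1 : ℝ) ≤ l + q * j := le_add_of_le_of_nonneg hl' (by positivity)
  set n : ℝ := l + q * j
  have hz : 0 < z := by linarith
  have hlogn := log_nonneg hn
  have hlogz := log_nonneg (hn.trans hjz)
  have h₁ := logPrimitive_add_mul_log_le hz (show 0 < n by linarith)
  have h₂ := logPrimitive_add_mul_log_le (show 0 < n by linarith) hz
  have h₃ : (z - n) * log z ≤ q * log x := by gcongr; linarith
  have h₄ : 0 ≤ (z - n) * log n := mul_nonneg (by linarith) hlogn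
  have h₅ : q * log n ≤ q * log x := by gcongr; exact hjz.trans hzx
  have h₆ : l * log l ≤ q * log l := by gcongr
  have h₇ := neg_one_le_logPrimitive (show (0 : ℝ) < l by linarith)
  rw [abs_le]
  unfold logPrimitive at *
  constructor <;> linarith

lemma abs_sum_log_modEq_sub_le (hq : 0 < q) (r : ℕ) {x z : ℝ} (hz : 0 < z) (hzx : z ≤ x)
    (hx : 1 ≤ x) :
    |∑ m ∈ Icc 1 ⌊z⌋₊ with m ≡ r [MOD q], log m - logPrimitive z / q| ≤ log x + 1 := by
  obtain ⟨l, hl, hlq, hrl⟩ := exists_modEq_pos_le hq r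
  have hmod (m : ℕ) : m ≡ r [MOD q] ↔ m ≡ l [MOD q] := ⟨(·.trans hrl), (·.trans hrl.symm)⟩
  have hq' : (1 : ℝ) ≤ q := by exact_mod_cast hq
  suffices h : |q * ∑ m ∈ Icc 1 ⌊z⌋₊ with m ≡ l [MOD q], log m - logPrimitive z| ≤
      q * log x + 1 by
    simp only [hmod]
    rw [← mul_le_mul_iff_of_pos_left (zero_lt_one.trans_le hq'),
      ← abs_of_nonneg (zero_le_one.trans hq'), ← abs_mul, abs_of_nonneg (zero_le_one.trans hq'),
      mul_sub, mul_div_cancel₀ _ (zero_lt_one.trans_le hq').ne']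
    linarith
  rcases lt_or_ge ⌊z⌋₊ l with hM | hM
  · have hempty : {m ∈ Icc 1 ⌊z⌋₊ | m ≡ l [MOD q]} = ∅ := by
      refine filter_eq_empty_iff.2 fun m hm hml => ?_
      rw [mem_Icc] at hm
      have := Nat.ModEq.le_of_lt_add hml.symm (by omega)
      omega
    have hzq : z ≤ q := ((Nat.floor_lt hz.le).1 hM).le.trans (by exact_mod_cast hlq)
    simpa [hempty] using abs_logPrimitive_le hz hzq hzx hx
  · rw [filter_modEq_Icc_eq_image hl hlq hM, sum_image fun i _ k _ hik => by
      simpa [hq.ne'] using hik]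
    push_cast
    refine abs_mul_sum_log_progression_sub_le hl hlq ?_ ?_ hzx
    · have h : l + q * ((⌊z⌋₊ - l) / q) ≤ ⌊z⌋₊ := by
        have := Nat.mul_div_le (⌊z⌋₊ - l) q
        omega
      exact_mod_cast (Nat.le_floor_iff hz.le).1 h
    · have h : ⌊z⌋₊ < l + q * ((⌊z⌋₊ - l) / q) + q := by
        have := Nat.lt_mul_div_succ (⌊z⌋₊ - l) hq
        rw [mul_add] at this
        omega
      exact_mod_cast ((Nat.floor_lt hz.le).1 h).le

end LogSums

section ChebyshevIdentity

open scoped ArithmeticFunction.vonMangoldt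

/-- Chebyshev's function `ψ(x; q, r)` of the residue class of `r` modulo `q`, for integral `x`. -/
noncomputable def psiMod (q r x : ℕ) : ℝ := ∑ n ∈ Icc 1 x with n ≡ r [MOD q], Λ n

/-- The number of multiples of `k` in `[1, n]` congruent to `r` modulo `q`; the analogue, in a
residue class, of the quotient `⌊n / k⌋` of Chebyshev's method. -/
def multiplesCount (q k n r : ℕ) : ℕ := #{m ∈ Icc 1 n | k ∣ m ∧ m ≡ r [MOD q]}

lemma card_filter_dvd_and {k : ℕ} (hk : 0 < k) (n : ℕ) (p : ℕ → Prop) [DecidablePred p] :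
    #{m ∈ Icc 1 n | k ∣ m ∧ p m} = #{i ∈ Icc 1 (n / k) | p (k * i)} := by
  have himage : {m ∈ Icc 1 n | k ∣ m ∧ p m} = {i ∈ Icc 1 (n / k) | p (k * i)}.image (k * ·) := by
    ext m
    simp only [mem_filter, mem_Icc, mem_image, Nat.le_div_iff_mul_le hk]
    constructor
    · rintro ⟨⟨hm, hmn⟩, ⟨i, rfl⟩, hp⟩
      exact ⟨i, ⟨⟨Nat.pos_of_mul_pos_left hm, by rwa [mul_comm]⟩, hp⟩, rfl⟩
    · rintro ⟨i, ⟨⟨hi, hin⟩, hp⟩, rfl⟩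
      exact ⟨⟨Nat.mul_pos hk hi, by rwa [mul_comm]⟩, dvd_mul_right k i, hp⟩
  rw [himage, card_image_of_injective _ (mul_right_injective₀ hk.ne')]

lemma log_eq_sum_vonMangoldt {j x : ℕ} (hj : 0 < j) (hjx : j ≤ x) :
    log j = ∑ N ∈ Icc 1 x with N ∣ j, Λ N := by
  rw [← ArithmeticFunction.vonMangoldt_sum]
  congr 1
  ext N
  simp only [Nat.mem_divisors, mem_filter, mem_Icc]
  refine ⟨fun h => ⟨⟨Nat.pos_of_dvd_of_pos h.1 hj, (Nat.le_of_dvd hj h.1).trans hjx⟩, h.1⟩,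
    fun h => ⟨h.2, hj.ne'⟩⟩

lemma sum_log_eq_sum_vonMangoldt_mul_card {k : ℕ} (hk : 0 < k) (q r x : ℕ) :
    ∑ j ∈ Icc 1 (x / k) with k * j ≡ r [MOD q], log j =
      ∑ N ∈ Icc 1 x, Λ N * #{m ∈ Icc 1 (x / N) | k ∣ m ∧ N * m ≡ r [MOD q]} := by
  have hlog : ∀ j ∈ {j ∈ Icc 1 (x / k) | k * j ≡ r [MOD q]},
      log j = ∑ N ∈ Icc 1 x, if N ∣ j then Λ N else 0 := fun j hj => by
    simp only [mem_filter, mem_Icc] at hj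
    rw [log_eq_sum_vonMangoldt hj.1.1 (hj.1.2.trans (Nat.div_le_self x k)), sum_filter]
  rw [sum_congr rfl hlog, sum_comm]
  refine sum_congr rfl fun N hN => ?_
  have hN' : 0 < N := (mem_Icc.1 hN).1
  rw [← sum_filter, sum_const, nsmul_eq_mul, mul_comm, filter_filter]
  simp only [and_comm (b := N ∣ _)]
  rw [card_filter_dvd_and hN', card_filter_dvd_and hk, Nat.div_div_eq_div_mul,
    Nat.div_div_eq_div_mul, mul_comm k N]
  simp only [mul_left_comm k N]

variable {ι : Type*} [Fintype ι] {q r x : ℕ} {c : ι → ℝ} {k : ι → ℕ} {σ : ℝ} {h : ℕ → ℝ}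

-- All the counts are determined by the largest `m ≤ n` in the class `r / N` modulo `q`.
lemma sum_mul_card_le_of_coprime {N n : ℕ} (hN : N.Coprime q) (hn : 0 < n) (hnonneg : 0 ≤ h n)
    (hmono : Monotone h)
    (hcert : ∀ n, 0 < n → n.Coprime q →
      ∑ i, c i * multiplesCount q (k i) n n ≤ (if n ≡ 1 [MOD q] then σ else 0) + h n)
    (hr : r.Coprime q) :
    ∑ i, c i * #{m ∈ Icc 1 n | k i ∣ m ∧ N * m ≡ r [MOD q]} ≤
      (if N ≡ r [MOD q] then σ else 0) + h n := by
  rcases ({m ∈ Icc 1 n | N * m ≡ r [MOD q]} : Finset ℕ).eq_empty_or_nonempty with hT | hT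
  · have hNr : ¬ N ≡ r [MOD q] := fun hNr =>
      filter_eq_empty_iff.1 hT (mem_Icc.2 ⟨le_rfl, hn⟩) (by rwa [mul_one])
    have hcount (i : ι) : #{m ∈ Icc 1 n | k i ∣ m ∧ N * m ≡ r [MOD q]} = 0 :=
      card_eq_zero.2 (filter_eq_empty_iff.2 fun m hm hkm => filter_eq_empty_iff.1 hT hm hkm.2)
    simpa [hcount, hNr] using hnonneg
  · obtain ⟨t, htmem, htmax⟩ := exists_max_image _ id hT
    simp only [mem_filter, mem_Icc] at htmem htmax
    obtain ⟨⟨ht, htn⟩, htr⟩ := htmem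
    have hiff (m : ℕ) : N * m ≡ r [MOD q] ↔ m ≡ t [MOD q] :=
      ⟨fun hm => (hm.trans htr.symm).cancel_left_of_coprime hN.symm,
        fun hm => (hm.mul_left N).trans htr⟩
    have htq : t.Coprime q := by
      have : (N * t).Coprime q := htr.gcd_eq.trans hr
      exact this.coprime_mul_left
    have hone : t ≡ 1 [MOD q] ↔ N ≡ r [MOD q] := by
      rw [← mul_one N, hiff]
      exact ⟨Nat.ModEq.symm, Nat.ModEq.symm⟩
    have hcount (i : ι) : #{m ∈ Icc 1 n | k i ∣ m ∧ N * m ≡ r [MOD q]} =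
        multiplesCount q (k i) t t := by
      refine congrArg card (Finset.ext fun m => ?_)
      simp only [mem_filter, mem_Icc, hiff]
      exact ⟨fun hm => ⟨⟨hm.1.1, htmax m ⟨hm.1, (hiff m).2 hm.2.2⟩⟩, hm.2⟩,
        fun hm => ⟨⟨hm.1.1, hm.1.2.trans htn⟩, hm.2⟩⟩
    simp only [hcount, ← hone]
    exact (hcert t ht htq).trans (by gcongr; exact hmono htn)

lemma sum_mul_sum_log_le (hr : r.Coprime q) (hk : ∀ i, 0 < k i) (hnonneg : ∀ n, 0 ≤ h n)
    (hmono : Monotone h)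
    (hcert : ∀ n, 0 < n → n.Coprime q →
      ∑ i, c i * multiplesCount q (k i) n n ≤ (if n ≡ 1 [MOD q] then σ else 0) + h n) :
    ∑ i, c i * ∑ j ∈ Icc 1 (x / k i) with k i * j ≡ r [MOD q], log j ≤
      σ * psiMod q r x + ∑ N ∈ Icc 1 x, Λ N * h (x / N) := by
  have hN : ∀ N ∈ Icc 1 x,
      Λ N * ∑ i, c i * #{m ∈ Icc 1 (x / N) | k i ∣ m ∧ N * m ≡ r [MOD q]} ≤
        σ * (if N ≡ r [MOD q] then Λ N else 0) + Λ N * h (x / N) := by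
    intro N hN
    rw [mem_Icc] at hN
    by_cases hNq : N.Coprime q
    · refine (mul_le_mul_of_nonneg_left (sum_mul_card_le_of_coprime hNq
        (Nat.div_pos hN.2 hN.1) (hnonneg _) hmono hcert hr)
        ArithmeticFunction.vonMangoldt_nonneg).trans_eq ?_
      split_ifs <;> ring
    · have hcount (m : ℕ) : ¬ N * m ≡ r [MOD q] := fun hm =>
        hNq (Nat.Coprime.coprime_mul_right (hm.gcd_eq.trans hr : (N * m).Coprime q))
      have hNr : ¬ N ≡ r [MOD q] := by simpa using hcount 1
      simpa [hcount, hNr] using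
        mul_nonneg ArithmeticFunction.vonMangoldt_nonneg (hnonneg (x / N))
  calc ∑ i, c i * ∑ j ∈ Icc 1 (x / k i) with k i * j ≡ r [MOD q], log j
      = ∑ N ∈ Icc 1 x, Λ N * ∑ i, c i * #{m ∈ Icc 1 (x / N) | k i ∣ m ∧ N * m ≡ r [MOD q]} := by
        simp only [sum_log_eq_sum_vonMangoldt_mul_card (hk _), mul_sum]
        rw [sum_comm]
        simp only [mul_left_comm]
    _ ≤ _ := sum_le_sum hN
    _ = _ := by rw [sum_add_distrib, ← mul_sum, ← sum_filter, psiMod]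

lemma abs_sum_log_mul_modEq_sub_le {k : ℕ} (hq : 0 < q) (hk : 0 < k) (hkq : k.Coprime q)
    (hx : 0 < x) :
    |∑ j ∈ Icc 1 (x / k) with k * j ≡ r [MOD q], log j - logPrimitive (x / k) / q| ≤
      log x + 1 := by
  obtain ⟨s, -, hs⟩ := Nat.exists_mul_mod_eq_of_coprime r hkq hq.ne'
  have hmod (j : ℕ) : k * j ≡ r [MOD q] ↔ j ≡ s [MOD q] :=
    ⟨fun hj => (hj.trans (Nat.ModEq.symm hs)).cancel_left_of_coprime hkq.symm,
      fun hj => (hj.mul_left k).trans hs⟩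
  have h := abs_sum_log_modEq_sub_le (z := (x : ℝ) / k) (x := x) hq s (by positivity)
    (div_le_self (by positivity) (by exact_mod_cast hk)) (by exact_mod_cast hx)
  rw [Nat.floor_div_natCast, Nat.floor_natCast] at h
  simpa only [hmod] using h

theorem le_mul_psiMod_add_sum (hq : 0 < q) (hr : r.Coprime q) (hx : 0 < x) (hk : ∀ i, 0 < k i)
    (hkq : ∀ i, (k i).Coprime q) (hsum : ∑ i, c i / k i = 0)
    (hnonneg : ∀ n, 0 ≤ h n) (hmono : Monotone h)
    (hcert : ∀ n, 0 < n → n.Coprime q →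
      ∑ i, c i * multiplesCount q (k i) n n ≤ (if n ≡ 1 [MOD q] then σ else 0) + h n) :
    -(∑ i, c i * (log (k i) / k i)) / q * x - (∑ i, |c i|) * (log x + 1) ≤
      σ * psiMod q r x + ∑ N ∈ Icc 1 x, Λ N * h (x / N) := by
  refine le_trans ?_ (sum_mul_sum_log_le hr hk hnonneg hmono hcert)
  have hterm (i : ι) : c i * (logPrimitive (x / k i) / q) - |c i| * (log x + 1) ≤
      c i * ∑ j ∈ Icc 1 (x / k i) with k i * j ≡ r [MOD q], log j := by
    have h := mul_le_mul_of_nonneg_left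
      (abs_sum_log_mul_modEq_sub_le (r := r) hq (hk i) (hkq i) hx) (abs_nonneg (c i))
    rw [← abs_mul] at h
    linarith [(abs_le.1 h).1]
  have hmain (i : ι) : c i * (logPrimitive (x / k i) / q) =
      x * (log x - 1) / q * (c i / k i) - x / q * (c i * (log (k i) / k i)) := by
    have := hk i
    rw [logPrimitive, log_div (by positivity) (by positivity)]
    field_simp
    ring
  refine le_trans (le_of_eq ?_) (sum_le_sum fun i _ => hterm i)
  simp only [hmain, sum_sub_distrib, ← mul_sum, ← sum_mul, hsum]
  ring

end ChebyshevIdentity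

section PackedGeneratingFunctions

/-- The number with `n` binary digits `1`, at the positions `0, d, 2d, …, (n - 1)d`. -/
def spacedOnes (d n : ℕ) : ℕ := (2 ^ (d * n) - 1) / (2 ^ d - 1)

lemma spacedOnes_eq_sum {d : ℕ} (hd : 0 < d) (n : ℕ) :
    spacedOnes d n = ∑ i ∈ range n, (2 ^ d) ^ i := by
  rw [Nat.geomSum_eq (Nat.one_lt_two_pow hd.ne' : 2 ≤ 2 ^ d), spacedOnes, pow_mul]

lemma natCast_spacedOnes {w d : ℕ} (hw : 0 < w) (hd : 0 < d) (n : ℕ) :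
    (spacedOnes (w * d) n : ℤ) = ∑ i ∈ range n, (((2 : ℤ) ^ w) ^ d) ^ i := by
  rw [spacedOnes_eq_sum (by positivity)]
  simp only [pow_mul, Nat.cast_sum, Nat.cast_pow, Nat.cast_ofNat]

lemma sum_mul_pow_div_mod {X : ℕ} {N : ℕ} {e : ℕ → ℕ} (he : ∀ n < N, e n < X) {n : ℕ}
    (hn : n < N) : (∑ i ∈ range N, e i * X ^ i) / X ^ n % X = e n := by
  induction n generalizing N e with
  | zero =>
    obtain ⟨N, rfl⟩ := Nat.exists_eq_succ_of_ne_zero hn.ne'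
    rw [sum_range_succ']
    simp only [pow_succ, ← mul_assoc, ← sum_mul]
    simpa [Nat.add_mod] using Nat.mod_eq_of_lt (he 0 hn)
  | succ n ih =>
    obtain ⟨N, rfl⟩ := Nat.exists_eq_succ_of_ne_zero (Nat.ne_zero_of_lt hn)
    rw [sum_range_succ', pow_succ', ← Nat.div_div_eq_div_mul]
    simp only [pow_succ, ← mul_assoc, ← sum_mul]
    have hX : 0 < X := (Nat.zero_le _).trans_lt (he 0 (Nat.succ_pos _))
    rw [pow_zero, mul_one, Nat.add_comm, Nat.add_mul_div_right _ _ hX,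
      Nat.div_eq_of_lt (he 0 (Nat.succ_pos _)), zero_add]
    exact ih (fun m hm => he (m + 1) (by omega)) (by omega)

lemma two_pow_le_of_testBit_sum {w N : ℕ} {e : ℕ → ℕ} (he : ∀ n < N, e n < 2 ^ (w + 1)) {n : ℕ}
    (hn : n < N)
    (hbit : (∑ i ∈ range N, e i * (2 ^ (w + 1)) ^ i).testBit ((w + 1) * n + w) = true) :
    2 ^ w ≤ e n := by
  refine Nat.ge_two_pow_of_testBit ?_ (i := w)
  rw [← sum_mul_pow_div_mod he hn, Nat.testBit_mod_two_pow, ← pow_mul, Nat.testBit_div_two_pow,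
    add_comm w ((w + 1) * n), hbit]
  simp

lemma testBit_sum_two_pow (s : Finset ℕ) (i : ℕ) :
    (∑ j ∈ s, 2 ^ j).testBit i = true ↔ i ∈ s := by
  rw [← Nat.mem_bitIndices, ← List.mem_toFinset, toFinset_bitIndices_sum_two_pow]

lemma testBit_spacedOnes {d : ℕ} (hd : 0 < d) (n i : ℕ) :
    (spacedOnes d n).testBit i = true ↔ ∃ j < n, d * j = i := by
  have h := testBit_sum_two_pow ((range n).image (d * ·)) i
  rw [sum_image fun _ _ _ _ h => Nat.eq_of_mul_eq_mul_left hd h] at h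
  simpa only [spacedOnes_eq_sum hd, pow_mul, mem_image, mem_range] using h

/-- Coefficient sequences are packed into integers as truncated generating functions, evaluated
at `X`: `a` represents `f` when `a ≡ ∑ n < N, f n X ^ n` modulo `X ^ N`. -/
def Packs (X : ℤ) (N : ℕ) (f : ℕ → ℤ) (a : ℤ) : Prop :=
  a ≡ ∑ n ∈ range N, f n * X ^ n [ZMOD X ^ N]

variable {X : ℤ} {N : ℕ} {f g : ℕ → ℤ} {a b : ℤ}

lemma Packs.add (hf : Packs X N f a) (hg : Packs X N g b) :
    Packs X N (fun n => f n + g n) (a + b) := by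
  simpa only [Packs, add_mul, sum_add_distrib] using Int.ModEq.add hf hg

lemma Packs.const_mul (hf : Packs X N f a) (c : ℤ) : Packs X N (fun n => c * f n) (c * a) := by
  simpa only [Packs, mul_assoc, ← mul_sum] using Int.ModEq.mul_left c hf

lemma Packs.list_sum {α : Type*} {f : α → ℕ → ℤ} {a : α → ℤ} {l : List α}
    (h : ∀ i ∈ l, Packs X N (f i) (a i)) :
    Packs X N (fun n => (l.map (f · n)).sum) (l.map a).sum := by
  induction l with
  | nil => simp [Packs]
  | cons i l ih =>
    simpa using (h i List.mem_cons_self).add (ih fun j hj => h j (List.mem_cons_of_mem i hj))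

lemma packs_ite_eq (k : ℕ) : Packs X N (fun n => if n = k then 1 else 0) (X ^ k) := by
  simp only [Packs, ite_mul, one_mul, zero_mul, sum_ite_eq', mem_range]
  split_ifs with hk
  · rfl
  · exact Int.modEq_zero_iff_dvd.2 (pow_dvd_pow X (not_lt.1 hk))

lemma sum_range_shift_modEq (f : ℕ → ℤ) (X : ℤ) (N d : ℕ) :
    ∑ n ∈ range N, (if d ≤ n then f (n - d) else 0) * X ^ n ≡
      X ^ d * ∑ n ∈ range N, f n * X ^ n [ZMOD X ^ N] := by
  have h : ∑ n ∈ range (d + N), (if d ≤ n then f (n - d) else 0) * X ^ n =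
      X ^ d * ∑ n ∈ range N, f n * X ^ n := by
    rw [sum_range_add, sum_eq_zero fun n hn => by simp [(mem_range.1 hn).not_ge], mul_sum, zero_add]
    exact sum_congr rfl fun n _ => by simp [pow_add, mul_left_comm]
  rw [← h, add_comm d N, sum_range_add, Int.modEq_iff_dvd, add_sub_cancel_left]
  exact dvd_sum fun n _ => by rw [pow_add]; exact Dvd.dvd.mul_left (dvd_mul_right _ _) _

-- The recurrence says that the generating function of `f` is that of `g` divided by `1 - X ^ d`.
lemma Packs.mul_geomSum_of_recurrence {d m : ℕ} (hN : N ≤ d * m)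
    (hrec : ∀ n, f n = g n + if d ≤ n then f (n - d) else 0) (hg : Packs X N g a) :
    Packs X N f (a * ∑ i ∈ range m, (X ^ d) ^ i) := by
  set F := ∑ n ∈ range N, f n * X ^ n
  have hF : F ≡ a + X ^ d * F [ZMOD X ^ N] := by
    have hsum : F = ∑ n ∈ range N, g n * X ^ n +
        ∑ n ∈ range N, (if d ≤ n then f (n - d) else 0) * X ^ n := by
      rw [← sum_add_distrib]
      exact sum_congr rfl fun n _ => by rw [← add_mul, ← hrec]
    conv_lhs => rw [hsum]
    exact (Int.ModEq.symm hg).add (sum_range_shift_modEq f X N d)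
  have hgeom := mul_geom_sum (X ^ d) m
  have hpow : X ^ N ∣ (X ^ d) ^ m := by rw [← pow_mul]; exact pow_dvd_pow X hN
  have hdvd := Int.modEq_iff_dvd.1 hF
  refine Int.modEq_iff_dvd.2 ?_
  have key : F - a * ∑ i ∈ range m, (X ^ d) ^ i =
      -(a + X ^ d * F - F) * ∑ i ∈ range m, (X ^ d) ^ i + F * (X ^ d) ^ m := by
    linear_combination F * hgeom
  rw [key]
  exact dvd_add (Dvd.dvd.mul_right (dvd_neg.2 hdvd) _) (Dvd.dvd.mul_left hpow _)

lemma natCast_add_sub_mod_modEq {M : ℕ} (hM : 0 < M) (u v : ℕ) :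
    (((u % M + M - v % M) % M : ℕ) : ℤ) ≡ u - v [ZMOD M] := by
  have hle : v % M ≤ u % M + M := (Nat.mod_lt v hM).le.trans (Nat.le_add_left _ _)
  push_cast [Nat.cast_sub hle]
  refine (Int.mod_modEq _ _).trans (Int.ModEq.sub ?_ (Int.mod_modEq _ _))
  simpa using (Int.mod_modEq (u : ℤ) M).add_right M

lemma packs_ite_le (k : ℕ) :
    Packs X N (fun n => if k ≤ n then 1 else 0) (X ^ k * ∑ i ∈ range N, (X ^ 1) ^ i) := by
  refine Packs.mul_geomSum_of_recurrence (by simp) (fun n => ?_) (packs_ite_eq k)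
  split_ifs <;> first | rfl | omega

lemma packs_ite_dvd {k m : ℕ} (hk : 0 < k) (hN : N ≤ k * m) :
    Packs X N (fun n => if 0 < n ∧ k ∣ n then 1 else 0)
      (X ^ k * ∑ i ∈ range m, (X ^ k) ^ i) := by
  refine Packs.mul_geomSum_of_recurrence hN (fun n => ?_) (packs_ite_eq k)
  rcases lt_trichotomy n k with h | rfl | h
  · simp only [h.ne, h.not_ge, if_false, add_zero, ite_eq_right_iff]
    exact fun h' => absurd h'.2 (Nat.not_dvd_of_pos_of_lt h'.1 h)
  · simp [hk]
  · simp only [h.ne', h.le, if_false, if_true, zero_add, Nat.sub_pos_of_lt h, hk.trans h, true_and,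
      Nat.dvd_sub_self_right, h.not_ge, or_false]

lemma packs_ite_modEq_one {q m : ℕ} (hq : 0 < q) (hN : N ≤ q * m) :
    Packs X N (fun n => if 0 < n ∧ n ≡ 1 [MOD q] then 1 else 0)
      (X ^ 1 * ∑ i ∈ range m, (X ^ q) ^ i) := by
  refine Packs.mul_geomSum_of_recurrence hN (fun n => ?_) (packs_ite_eq 1)
  rcases lt_trichotomy n 1 with hn | rfl | hn
  · simp [Nat.lt_one_iff.1 hn, hq.ne']
  · simpa [Nat.ModEq.refl] using fun _ h => absurd h hq.ne'
  have hn₀ : 0 < n := by omega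
  rcases le_or_gt n q with hnq | hqn
  · have hmod : ¬n ≡ 1 [MOD q] := fun h => by
      have := Nat.le_of_dvd (Nat.sub_pos_of_lt hn) ((Nat.modEq_iff_dvd' hn₀).1 h.symm)
      omega
    simp [hmod, hn.ne', hnq]
  · have hsub : n - q ≡ n [MOD q] := (Nat.modEq_iff_dvd' (Nat.sub_le n q)).2 ⟨1, by omega⟩
    have hiff : n - q ≡ 1 [MOD q] ↔ n ≡ 1 [MOD q] := ⟨hsub.symm.trans, hsub.trans⟩
    simp [hn.ne', hn₀, hqn, hqn.le, hiff]

end PackedGeneratingFunctions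

section MultiplesCount

variable {q k n : ℕ}

lemma multiplesCount_le (q k n r : ℕ) : multiplesCount q k n r ≤ n :=
  (card_filter_le _ _).trans (by simp)

lemma multiplesCount_self_eq (hq : 0 < q) (k n : ℕ) :
    multiplesCount q k n n =
      (if 0 < n ∧ k ∣ n then 1 else 0) +
        if q ≤ n then multiplesCount q k (n - q) (n - q) else 0 := by
  rcases n.eq_zero_or_pos with rfl | hn
  · simp [multiplesCount, hq.ne']
  have hsplit : multiplesCount q k n n =
      (if k ∣ n then 1 else 0) + #{m ∈ Ico 1 n | k ∣ m ∧ m ≡ n [MOD q]} := by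
    rw [multiplesCount, ← Ico_insert_right hn, filter_insert]
    split_ifs with h h' h' <;> simp_all [Nat.ModEq.refl, add_comm]
  have hshift (hqn : q ≤ n) : #{m ∈ Ico 1 n | k ∣ m ∧ m ≡ n [MOD q]} =
      multiplesCount q k (n - q) (n - q) := by
    have hmod : n - q ≡ n [MOD q] := (Nat.modEq_iff_dvd' (Nat.sub_le n q)).2 ⟨1, by omega⟩
    refine congrArg card (Finset.ext fun m => ?_)
    simp only [mem_filter, mem_Ico, mem_Icc]
    constructor
    · rintro ⟨hm, hk, h⟩
      have := Nat.le_of_dvd (by omega) ((Nat.modEq_iff_dvd' hm.2.le).1 h)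
      exact ⟨by omega, hk, h.trans hmod.symm⟩
    · rintro ⟨hm, hk, h⟩
      exact ⟨by omega, hk, h.trans hmod⟩
  have hempty (hqn : n < q) : #{m ∈ Ico 1 n | k ∣ m ∧ m ≡ n [MOD q]} = 0 := by
    rw [card_filter_eq_zero_iff]
    rintro m hm ⟨-, h⟩
    rw [mem_Ico] at hm
    exact hm.2.ne (h.eq_of_lt_of_lt (hm.2.trans hqn) hqn)
  rw [hsplit]
  split_ifs <;> simp_all

lemma abs_multiplesCount_sub_le (hq : 0 < q) (hk : 0 < k) (hkq : k.Coprime q) (n r : ℕ) :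
    |(multiplesCount q k n r : ℝ) - n / (q * k)| ≤ 1 := by
  obtain ⟨v, hv₀, hvr⟩ := Nat.chineseRemainder hkq 0 r
  have hcount : multiplesCount q k n r = #{m ∈ Ioc 0 n | m ≡ v [MOD k * q]} := by
    refine congrArg card (filter_congr fun m _ => ?_)
    rw [← Nat.modEq_and_modEq_iff_modEq_mul hkq, ← Nat.modEq_zero_iff_dvd]
    exact ⟨fun h => ⟨h.1.trans hv₀.symm, h.2.trans hvr.symm⟩,
      fun h => ⟨h.1.trans hv₀, h.2.trans hvr⟩⟩
  have hcard := Nat.Ioc_filter_modEq_card 0 n (Nat.mul_pos hk hq) v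
  rw [← hcount] at hcard
  push_cast at hcard
  have hmono : ⌊((0 : ℚ) - v) / (k * q)⌋ ≤ ⌊((n : ℚ) - v) / (k * q)⌋ :=
    Int.floor_mono (by gcongr; exact n.cast_nonneg)
  rw [max_eq_left (sub_nonneg.2 hmono)] at hcard
  have hQ : |(multiplesCount q k n r : ℚ) - n / (q * k)| ≤ 1 := by
    have hsub : ((n : ℚ) - v) / (k * q) - (0 - v) / (k * q) = n / (q * k) := by ring
    have hcard' : (multiplesCount q k n r : ℚ) =
        ⌊((n : ℚ) - v) / (k * q)⌋ - ⌊((0 : ℚ) - v) / (k * q)⌋ := by exact_mod_cast hcard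
    rw [hcard', ← hsub, abs_le]
    have := Int.floor_le (((n : ℚ) - v) / (k * q))
    have := Int.lt_floor_add_one (((n : ℚ) - v) / (k * q))
    have := Int.floor_le (((0 : ℚ) - v) / (k * q))
    have := Int.lt_floor_add_one (((0 : ℚ) - v) / (k * q))
    constructor <;> linarith
  simpa using (Rat.cast_le (K := ℝ)).2 hQ

lemma packs_multiplesCount {X : ℤ} {N m m' : ℕ} (hq : 0 < q) (hk : 0 < k) (hN : N ≤ q * m)
    (hN' : N ≤ k * m') :
    Packs X N (fun n => multiplesCount q k n n)
      ((X ^ k * ∑ i ∈ range m', (X ^ k) ^ i) * ∑ i ∈ range m, (X ^ q) ^ i) := by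
  refine Packs.mul_geomSum_of_recurrence hN (fun n => ?_) (packs_ite_dvd hk hN')
  rw [multiplesCount_self_eq hq]
  push_cast
  rfl

end MultiplesCount

section ListForm

open scoped ArithmeticFunction.vonMangoldt

theorem le_mul_psiMod_add_sum_list {q r x : ℕ} {l : List (ℕ × ℝ)} {σ : ℝ} {h : ℕ → ℝ}
    (hq : 0 < q) (hr : r.Coprime q) (hx : 0 < x) (hl : ∀ e ∈ l, 0 < e.1 ∧ e.1.Coprime q)
    (hsum : (l.map fun e => e.2 / (e.1 : ℝ)).sum = 0) (hnonneg : ∀ n, 0 ≤ h n) (hmono : Monotone h)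
    (hcert : ∀ n, 0 < n → n.Coprime q →
      (l.map fun e => e.2 * (multiplesCount q e.1 n n : ℝ)).sum ≤
        (if n ≡ 1 [MOD q] then σ else 0) + h n) :
    -(l.map fun e => e.2 * (log e.1 / e.1)).sum / q * x -
        (l.map fun e => |e.2|).sum * (log x + 1) ≤
      σ * psiMod q r x + ∑ N ∈ Icc 1 x, Λ N * h (x / N) := by
  have hfin (f : ℕ × ℝ → ℝ) : ∑ i : Fin l.length, f l[i] = (l.map f).sum :=
    Fin.sum_univ_fun_getElem l f
  simp only [← hfin] at hsum hcert ⊢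
  exact le_mul_psiMod_add_sum hq hr hx (fun i => (hl _ (l.getElem_mem i.2)).1)
    (fun i => (hl _ (l.getElem_mem i.2)).2) hsum hnonneg hmono hcert

end ListForm

section FloorLogTwo

/-- `⌊2 ^ t * log₂ k⌋`, by repeated squaring. -/
def floorLogTwo (k : ℕ) : ℕ → ℕ
  | 0 => Nat.log2 k
  | t + 1 => 2 * floorLogTwo k t + k ^ 2 ^ (t + 1) / 2 ^ (2 * floorLogTwo k t + 1)

lemma two_pow_floorLogTwo_le {k : ℕ} (hk : 0 < k) (t : ℕ) :
    2 ^ floorLogTwo k t ≤ k ^ 2 ^ t ∧ k ^ 2 ^ t < 2 ^ (floorLogTwo k t + 1) := by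
  induction t with
  | zero => simpa [floorLogTwo] using ⟨Nat.log2_self_le hk.ne', Nat.lt_log2_self⟩
  | succ t ih =>
    rw [floorLogTwo]
    generalize floorLogTwo k t = e at *
    have hsq : k ^ 2 ^ (t + 1) = k ^ 2 ^ t * k ^ 2 ^ t := by rw [pow_succ, mul_two, pow_add]
    have hle : 2 ^ (2 * e) ≤ k ^ 2 ^ (t + 1) := by
      rw [hsq, two_mul, pow_add]
      exact Nat.mul_le_mul ih.1 ih.1
    have hlt : k ^ 2 ^ (t + 1) < 2 ^ (2 * e + 1 + 1) := by
      rw [hsq, show 2 * e + 1 + 1 = (e + 1) + (e + 1) by ring, pow_add]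
      exact Nat.mul_lt_mul'' ih.2 ih.2
    rcases lt_or_ge (k ^ 2 ^ (t + 1)) (2 ^ (2 * e + 1)) with h | h
    · rw [Nat.div_eq_of_lt h]
      exact ⟨hle, h⟩
    · rw [Nat.div_eq_of_lt_le (k := 1) (by simpa using h)
        (by rwa [one_add_one_eq_two, ← pow_succ'])]
      exact ⟨h, hlt⟩

lemma floorLogTwo_mul_le_log {k : ℕ} (hk : 0 < k) (t : ℕ) :
    floorLogTwo k t * log 2 ≤ 2 ^ t * log k ∧ 2 ^ t * log k ≤ (floorLogTwo k t + 1) * log 2 := by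
  obtain ⟨hle, hlt⟩ := two_pow_floorLogTwo_le hk t
  have h₁ := log_le_log (by positivity) (by exact_mod_cast hle :
    (2 : ℝ) ^ floorLogTwo k t ≤ (k : ℝ) ^ 2 ^ t)
  have h₂ := log_le_log (by positivity) (by exact_mod_cast hlt.le :
    (k : ℝ) ^ 2 ^ t ≤ (2 : ℝ) ^ (floorLogTwo k t + 1))
  simp only [log_pow] at h₁ h₂
  push_cast at h₁ h₂
  exact ⟨h₁, h₂⟩

end FloorLogTwo

/-- The data of an instance of Chebyshev's method in the residue classes modulo `modulus`. Writing
`coeffs` as a list of pairs `(k, c_k)` and `thresholds` as a list of pairs `(y, a_y)`, the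
inequality to be certified is
`∑ c_k #{m ≤ n | k ∣ m, m ≡ n} ≤ weight * [n ≡ 1] + ∑ a_y [y ≤ n]` for `n` coprime to `modulus`.
It is checked digit by digit for `n < modulus * blocks`. The bound that results is
`slope * x - error * (log x + 1) ≤ weight * ψ(x; modulus, r)`, so that a negative `weight` gives
upper bounds. -/
structure ChebyshevCertificate where
  modulus : ℕ
  weight : ℤ
  coeffs : List (ℕ × ℤ)
  thresholds : List (ℕ × ℕ)
  blocks : ℕ
  slope : ℚ
  error : ℕ

namespace ChebyshevCertificate

variable (c : ChebyshevCertificate)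

/-- The range in which the inequality of a certificate is checked digit by digit. -/
def bound : ℕ := c.modulus * c.blocks

/-- The step function `∑ a_y [y ≤ n]` of a certificate. -/
def steps (n : ℕ) : ℕ := (c.thresholds.map fun e => if e.1 ≤ n then e.2 else 0).sum

/-- The difference of the two sides of the inequality of a certificate. -/
def surplus (n : ℕ) : ℤ :=
  ((if 0 < n ∧ n ≡ 1 [MOD c.modulus] then c.weight else 0) -
    (c.coeffs.map fun e => e.2 * (multiplesCount c.modulus e.1 n n : ℤ)).sum) + c.steps n

/-- The packed generating function of the arithmetical part of a certificate, up to the factor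
`1 - X ^ modulus`, where `X = 2 ^ 32`; `part` selects the positive or the negative part of the
coefficients, as the kernel computes with natural numbers. -/
def packedCoeffs (part : ℤ → ℕ) : ℕ :=
  part c.weight * 2 ^ 32 + (c.coeffs.map fun e =>
    part (-e.2) * ((2 ^ 32) ^ e.1 * spacedOnes (32 * e.1) (c.bound / e.1 + 1))).sum

/-- The digits of this number in base `2 ^ 32` are `surplus n + 2 ^ 31` for `n < bound`. -/
def packedSurplus : ℕ :=
  let M := (2 ^ 32) ^ c.bound
  let ones := spacedOnes (32 * c.modulus) c.blocks
  let steps := spacedOnes 32 c.bound *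
    (((0, 2 ^ 31) :: c.thresholds).map fun e => e.2 * (2 ^ 32) ^ e.1).sum
  ((ones * c.packedCoeffs Int.toNat + steps) % M + M -
    ones * c.packedCoeffs (fun a => (-a).toNat) % M) % M

/-- The sum `∑ c_k / k`, which is subtracted from the coefficient `c_1`. -/
def excess : ℚ := (c.coeffs.map fun e => (e.2 : ℚ) / e.1).sum

/-- The sum `∑ |c_k|`. -/
def totalCoeffs : ℕ := (c.coeffs.map fun e => e.2.natAbs).sum

/-- The sum `∑ a_y`. -/
def totalSteps : ℕ := (c.thresholds.map Prod.snd).sum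

/-- An upper bound for `2 ^ 14 / log 2 * ∑ c_k log k / k`. -/
def logSum : ℚ :=
  (c.coeffs.map fun e => ((e.2 * (floorLogTwo e.1 14 : ℤ) + max e.2 0 : ℤ) : ℚ) / e.1).sum

/-- The numerical conditions that make the bound of a certificate a consequence of
`ψ(n) ≤ 27 / 25 * n` for `n < x`. The last two are the same one at the ends of an interval that
contains `log 2`. -/
structure IsValid : Prop where
  modulus_pos : 0 < c.modulus
  coeffs_coprime : ∀ e ∈ c.coeffs, 0 < e.1 ∧ Nat.gcd e.1 c.modulus = 1
  thresholds_mem : ∀ e ∈ c.thresholds, 2 ≤ e.1 ∧ e.1 ≤ c.bound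
  excess_nonneg : 0 ≤ c.excess
  excess_le_one : c.excess ≤ 1
  totalCoeffs_lt : c.totalCoeffs < c.error
  error_le : c.error + c.weight.natAbs ≤ c.totalSteps
  size_lt : c.weight.natAbs + c.totalSteps + c.totalCoeffs * c.bound < 2 ^ 31
  digits : ∀ r ∈ List.range c.modulus, Nat.gcd r c.modulus = 1 →
    (c.packedSurplus >>> (32 * r + 31)) &&& spacedOnes (32 * c.modulus) c.blocks =
      spacedOnes (32 * c.modulus) c.blocks
  slope_le : ∀ t ∈ [(6931471803 / 10000000000 : ℚ), 6931471808 / 10000000000],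
    c.slope + t * c.logSum / (2 ^ 14 * c.modulus) +
      27 / 25 * (c.thresholds.map fun e => (e.2 : ℚ) / e.1).sum ≤ 0

variable {c}

lemma packs_steps (c : ChebyshevCertificate) : Packs (2 ^ 32) c.bound (fun n => c.steps n + 2 ^ 31)
    (spacedOnes 32 c.bound *
      (((0, 2 ^ 31) :: c.thresholds).map fun e => e.2 * (2 ^ 32) ^ e.1).sum : ℕ) := by
  have h := Packs.list_sum (X := 2 ^ 32) (N := c.bound) (l := (0, 2 ^ 31) :: c.thresholds)
    fun e _ => (packs_ite_le e.1).const_mul e.2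
  convert h using 1
  · funext n
    simp [steps, Nat.cast_list_sum, Function.comp_def, add_comm]
  · rw [mul_comm, ← mul_one 32, Nat.cast_mul, natCast_spacedOnes (by norm_num) one_pos,
      Nat.cast_list_sum, List.map_map, ← List.sum_map_mul_right]
    simp [mul_assoc]

lemma packedCoeffs_toNat_sub (hk : ∀ e ∈ c.coeffs, 0 < e.1) :
    (c.packedCoeffs Int.toNat : ℤ) - c.packedCoeffs (fun a => (-a).toNat) =
      c.weight * (2 ^ 32) ^ 1 + -1 * (c.coeffs.map fun e => e.2 * ((2 ^ 32) ^ e.1 *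
        ∑ i ∈ range (c.bound / e.1 + 1), ((2 ^ 32) ^ e.1) ^ i)).sum := by
  have hlist (l : List (ℕ × ℤ)) (f : ℕ → ℕ) :
      ((l.map fun e => (-e.2).toNat * f e.1).sum : ℤ) -
          (l.map fun e => (- -e.2).toNat * f e.1).sum =
        -1 * (l.map fun e => e.2 * (f e.1 : ℤ)).sum := by
    induction l with
    | nil => simp
    | cons e l ih =>
      simp only [List.map_cons, List.sum_cons, Nat.cast_add, Nat.cast_mul]
      linear_combination ih + (f e.1 : ℤ) * Int.toNat_sub_toNat_neg (-e.2)
  have hcongr : (c.coeffs.map fun e => e.2 * ((2 ^ 32) ^ e.1 *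
      ∑ i ∈ range (c.bound / e.1 + 1), (((2 : ℤ) ^ 32) ^ e.1) ^ i)) = c.coeffs.map fun e =>
        e.2 * (((2 ^ 32) ^ e.1 * spacedOnes (32 * e.1) (c.bound / e.1 + 1) : ℕ) : ℤ) :=
    List.map_congr_left fun e he => by
      rw [← natCast_spacedOnes (by norm_num) (hk e he)]
      push_cast
      rfl
  rw [hcongr, ← hlist c.coeffs fun k => (2 ^ 32) ^ k * spacedOnes (32 * k) (c.bound / k + 1)]
  simp only [packedCoeffs, Nat.cast_add, Nat.cast_mul]
  linear_combination (2 ^ 32) * Int.toNat_sub_toNat_neg c.weight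

lemma packedSurplus_modEq (c : ChebyshevCertificate) :
    c.packedSurplus ≡ spacedOnes (32 * c.modulus) c.blocks *
      ((c.packedCoeffs Int.toNat : ℤ) - c.packedCoeffs (fun a => (-a).toNat)) +
        (spacedOnes 32 c.bound *
          (((0, 2 ^ 31) :: c.thresholds).map fun e => e.2 * (2 ^ 32) ^ e.1).sum : ℕ)
      [ZMOD (2 ^ 32) ^ c.bound] := by
  have h := natCast_add_sub_mod_modEq (M := (2 ^ 32) ^ c.bound) (by positivity)
    (spacedOnes (32 * c.modulus) c.blocks * c.packedCoeffs Int.toNat + spacedOnes 32 c.bound *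
      (((0, 2 ^ 31) :: c.thresholds).map fun e => e.2 * (2 ^ 32) ^ e.1).sum)
    (spacedOnes (32 * c.modulus) c.blocks * c.packedCoeffs (fun a => (-a).toNat))
  rw [Nat.cast_add, Nat.cast_mul, Nat.cast_mul _ (c.packedCoeffs _), add_sub_right_comm,
    ← mul_sub] at h
  exact_mod_cast h

lemma packs_surplus (hq : 0 < c.modulus) (hk : ∀ e ∈ c.coeffs, 0 < e.1) :
    Packs (2 ^ 32) c.bound (fun n => c.surplus n + 2 ^ 31) c.packedSurplus := by
  have hweight := (packs_ite_modEq_one (X := 2 ^ 32) (N := c.bound) hq le_rfl).const_mul c.weight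
  have hcoeffs := (Packs.list_sum (X := 2 ^ 32) (N := c.bound) (l := c.coeffs)
    fun e he => (packs_multiplesCount hq (hk e he) le_rfl
      (Nat.lt_mul_div_succ c.bound (hk e he)).le).const_mul e.2).const_mul (-1)
  have h := (hweight.add hcoeffs).add (packs_steps c)
  have hmod := packedSurplus_modEq c
  rw [packedCoeffs_toNat_sub hk, natCast_spacedOnes (by norm_num) hq] at hmod
  have hsurplus (n : ℕ) : c.surplus n + 2 ^ 31 =
      (c.weight * if 0 < n ∧ n ≡ 1 [MOD c.modulus] then 1 else 0) +
        -1 * (c.coeffs.map fun e => e.2 * (multiplesCount c.modulus e.1 n n : ℤ)).sum +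
          (c.steps n + 2 ^ 31) := by
    rw [surplus, mul_ite, mul_one, mul_zero]
    ring
  simp only [hsurplus]
  refine hmod.trans (Eq.trans (congrArg (· % _) ?_) h)
  simp only [← mul_assoc, List.sum_map_mul_right]
  ring

lemma steps_mono : Monotone c.steps := by
  intro m n hmn
  refine List.sum_le_sum fun e _ => ?_
  split_ifs <;> omega

lemma steps_le (n : ℕ) : c.steps n ≤ c.totalSteps :=
  List.sum_le_sum fun e _ => by split_ifs <;> omega

lemma steps_eq_totalSteps (h : ∀ e ∈ c.thresholds, e.1 ≤ c.bound) {n : ℕ} (hn : c.bound ≤ n) :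
    c.steps n = c.totalSteps :=
  congrArg List.sum (List.map_congr_left fun e he => if_pos ((h e he).trans hn))

lemma abs_surplus_le (n : ℕ) :
    |c.surplus n| ≤ c.weight.natAbs + c.totalSteps + c.totalCoeffs * n := by
  have hsum : |(c.coeffs.map fun e => e.2 * (multiplesCount c.modulus e.1 n n : ℤ)).sum| ≤
      c.totalCoeffs * n := by
    rw [totalCoeffs, Nat.cast_list_sum, List.map_map, ← List.sum_map_mul_right]
    refine (List.le_sum_of_subadditive _ abs_zero.le abs_add_le _).trans ?_
    rw [List.map_map]
    refine List.sum_le_sum fun e _ => ?_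
    simp only [Function.comp_apply, abs_mul, Nat.abs_cast, Int.natCast_natAbs]
    gcongr
    exact multiplesCount_le _ _ _ _
  have hsteps : (c.steps n : ℤ) ≤ c.totalSteps := mod_cast steps_le n
  have hweight : |if 0 < n ∧ n ≡ 1 [MOD c.modulus] then c.weight else 0| ≤ c.weight.natAbs := by
    split_ifs <;> simp
  rw [surplus]
  have := abs_le.1 hsum
  have := abs_le.1 hweight
  exact abs_le.2 ⟨by omega, by omega⟩

lemma IsValid.abs_surplus_lt (h : c.IsValid) {n : ℕ} (hn : n < c.bound) :
    |c.surplus n| < 2 ^ 31 := by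
  have hle : c.totalCoeffs * n ≤ c.totalCoeffs * c.bound := by gcongr
  have := h.size_lt
  exact (abs_surplus_le n).trans_lt (by exact_mod_cast (by omega))

lemma IsValid.testBit_packedSurplus (h : c.IsValid) {n : ℕ} (hn : n < c.bound)
    (hcop : n.Coprime c.modulus) : c.packedSurplus.testBit (32 * n + 31) = true := by
  have hq := h.modulus_pos
  have hones := congrArg (fun N => N.testBit (32 * c.modulus * (n / c.modulus)))
    (h.digits (n % c.modulus) (List.mem_range.2 (Nat.mod_lt n hq))
      ((Nat.mod_modEq n _).gcd_eq.trans hcop))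
  have hmem : (spacedOnes (32 * c.modulus) c.blocks).testBit
      (32 * c.modulus * (n / c.modulus)) = true :=
    (testBit_spacedOnes (by positivity) _ _).2 ⟨_, Nat.div_lt_of_lt_mul hn, rfl⟩
  have hpos : 32 * (n % c.modulus) + 31 + 32 * c.modulus * (n / c.modulus) = 32 * n + 31 := by
    conv_rhs => rw [← Nat.mod_add_div n c.modulus]
    ring
  simpa only [Nat.testBit_and, hmem, Nat.testBit_shiftRight, Bool.and_true, hpos] using hones

lemma IsValid.surplus_nonneg (h : c.IsValid) {n : ℕ} (hn : n < c.bound)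
    (hcop : n.Coprime c.modulus) : 0 ≤ c.surplus n := by
  set d : ℕ → ℕ := fun m => (c.surplus m + 2 ^ 31).toNat
  have hcast (m : ℕ) (hm : m < c.bound) : (d m : ℤ) = c.surplus m + 2 ^ 31 :=
    Int.toNat_of_nonneg (by linarith [(abs_lt.1 (h.abs_surplus_lt hm)).1])
  have hd (m : ℕ) (hm : m < c.bound) : d m < 2 ^ (31 + 1) := by
    have := hcast m hm
    have := (abs_lt.1 (h.abs_surplus_lt hm)).2
    omega
  have hmod : c.packedSurplus % 2 ^ (32 * c.bound) =
      (∑ m ∈ range c.bound, d m * (2 ^ (31 + 1)) ^ m) % 2 ^ (32 * c.bound) := by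
    have hpacks := packs_surplus h.modulus_pos fun e he => (h.coeffs_coprime e he).1
    rw [Packs, sum_congr rfl fun m hm => by rw [← hcast m (mem_range.1 hm)]] at hpacks
    rw [pow_mul]
    exact_mod_cast hpacks
  have hlt : 32 * n + 31 < 32 * c.bound := by omega
  have hge := two_pow_le_of_testBit_sum hd hn (by
    have hbit := congrArg (fun N => N.testBit (32 * n + 31)) hmod
    simpa [Nat.testBit_mod_two_pow, hlt, h.testBit_packedSurplus hn hcop] using hbit.symm)
  have := hcast n hn
  omega

open scoped ArithmeticFunction.vonMangoldt Chebyshev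

/-- The coefficients of a certificate, where `c_1` is modified so that `∑ c_k / k = 0`. -/
noncomputable def balancedCoeffs (c : ChebyshevCertificate) : List (ℕ × ℝ) :=
  (1, -(c.excess : ℝ)) :: c.coeffs.map fun e => (e.1, (e.2 : ℝ))

lemma sum_balancedCoeffs_div : (c.balancedCoeffs.map fun e => e.2 / (e.1 : ℝ)).sum = 0 := by
  simp [balancedCoeffs, excess, Rat.cast_list_sum, Function.comp_def]

lemma sum_vonMangoldt_mul_steps (c : ChebyshevCertificate) (x : ℕ)
    (h : ∀ e ∈ c.thresholds, 0 < e.1) :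
    ∑ N ∈ Icc 1 x, Λ N * c.steps (x / N) =
      (c.thresholds.map fun e => e.2 * ψ ((x / e.1 : ℕ) : ℝ)).sum := by
  have hpsi (y : ℕ) (hy : 0 < y) :
      ∑ N ∈ Icc 1 x, Λ N * (if y ≤ x / N then 1 else 0) = ψ ((x / y : ℕ) : ℝ) := by
    rw [Chebyshev.psi, Nat.floor_natCast]
    simp only [mul_ite, mul_one, mul_zero]
    rw [← sum_filter]
    congr 1
    ext N
    simp only [mem_filter, mem_Icc, mem_Ioc]
    constructor
    · rintro ⟨⟨hN, -⟩, hyx⟩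
      exact ⟨hN, (Nat.le_div_iff_mul_le hy).2
        (by rw [mul_comm]; exact (Nat.le_div_iff_mul_le hN).1 hyx)⟩
    · rintro ⟨hN, hNx⟩
      exact ⟨⟨hN, hNx.trans (Nat.div_le_self x y)⟩, (Nat.le_div_iff_mul_le hN).2
        (by rw [mul_comm]; exact (Nat.le_div_iff_mul_le hy).1 hNx)⟩
  have hsteps (n : ℕ) : (c.steps n : ℝ) =
      (c.thresholds.map fun e => (e.2 : ℝ) * if e.1 ≤ n then 1 else 0).sum := by
    simp [steps, Nat.cast_list_sum, Function.comp_def]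
  simp only [hsteps, ← List.sum_map_mul_left]
  simp only [← Fin.sum_univ_fun_getElem]
  rw [sum_comm]
  refine sum_congr rfl fun i _ => ?_
  rw [← hpsi _ (h _ (List.getElem_mem i.2)), mul_sum]
  exact sum_congr rfl fun N _ => mul_left_comm _ _ _

lemma IsValid.sum_abs_balancedCoeffs_le (h : c.IsValid) :
    (c.balancedCoeffs.map fun e => |e.2|).sum ≤ c.error := by
  have hsum : (c.balancedCoeffs.map fun e => |e.2|).sum = c.excess + c.totalCoeffs := by
    have : (0 : ℝ) ≤ c.excess := mod_cast h.excess_nonneg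
    simp [balancedCoeffs, totalCoeffs, Nat.cast_list_sum, Function.comp_def, abs_of_nonneg this]
  have : (c.excess : ℝ) ≤ 1 := mod_cast h.excess_le_one
  have : (c.totalCoeffs + 1 : ℝ) ≤ c.error := mod_cast h.totalCoeffs_lt
  linarith

lemma IsValid.balancedCoeffs_coprime (h : c.IsValid) :
    ∀ e ∈ c.balancedCoeffs, 0 < e.1 ∧ e.1.Coprime c.modulus := by
  simp only [balancedCoeffs, List.forall_mem_cons, List.forall_mem_map]
  exact ⟨⟨one_pos, Nat.coprime_one_left _⟩, h.coeffs_coprime⟩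

lemma IsValid.sum_mul_multiplesCount_le_of_lt (h : c.IsValid) {n : ℕ}
    (hcop : n.Coprime c.modulus) (hn : 0 < n) (hlt : n < c.bound) :
    (c.balancedCoeffs.map fun e => e.2 * (multiplesCount c.modulus e.1 n n : ℝ)).sum ≤
      (if n ≡ 1 [MOD c.modulus] then (c.weight : ℝ) else 0) + c.steps n := by
  have hle : (c.coeffs.map fun e => e.2 * (multiplesCount c.modulus e.1 n n : ℤ)).sum ≤
      (if n ≡ 1 [MOD c.modulus] then c.weight else 0) + c.steps n := by
    have := h.surplus_nonneg hlt hcop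
    simp only [surplus, hn, true_and] at this
    linarith
  have hle_real : (c.coeffs.map fun e => (e.2 : ℝ) * (multiplesCount c.modulus e.1 n n : ℝ)).sum ≤
      (if n ≡ 1 [MOD c.modulus] then (c.weight : ℝ) else 0) + c.steps n := by
    simpa [Int.cast_list_sum, Function.comp_def, apply_ite] using (Int.cast_le (R := ℝ)).2 hle
  have : (0 : ℝ) ≤ c.excess := mod_cast h.excess_nonneg
  simp only [balancedCoeffs, List.map_cons, List.sum_cons, List.map_map, Function.comp_def]
  nlinarith [(multiplesCount c.modulus 1 n n).cast_nonneg (α := ℝ)]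

-- For large `n` the counts can be replaced by `n / (q k)`, and these cancel as `∑ c_k / k = 0`.
lemma IsValid.sum_mul_multiplesCount_le_of_ge (h : c.IsValid) {n : ℕ} (hge : c.bound ≤ n) :
    (c.balancedCoeffs.map fun e => e.2 * (multiplesCount c.modulus e.1 n n : ℝ)).sum ≤
      (if n ≡ 1 [MOD c.modulus] then (c.weight : ℝ) else 0) + c.steps n := by
  have hshift : (c.balancedCoeffs.map fun e => e.2 *
      ((multiplesCount c.modulus e.1 n n : ℝ) - n / (c.modulus * e.1))).sum =
      (c.balancedCoeffs.map fun e => e.2 * (multiplesCount c.modulus e.1 n n : ℝ)).sum := by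
    have (e : ℕ × ℝ) : e.2 * ((multiplesCount c.modulus e.1 n n : ℝ) - n / (c.modulus * e.1)) =
        e.2 * multiplesCount c.modulus e.1 n n + -(n / c.modulus : ℝ) * (e.2 / e.1) := by ring
    simp only [this, List.sum_map_add, List.sum_map_mul_left, sum_balancedCoeffs_div, mul_zero,
      add_zero]
  have habs : (c.balancedCoeffs.map fun e => e.2 *
      ((multiplesCount c.modulus e.1 n n : ℝ) - n / (c.modulus * e.1))).sum ≤
      (c.balancedCoeffs.map fun e => |e.2|).sum := by
    refine List.sum_le_sum fun e he => (le_abs_self _).trans ?_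
    obtain ⟨hk, hkq⟩ := h.balancedCoeffs_coprime e he
    rw [abs_mul]
    exact mul_le_of_le_one_right (abs_nonneg _)
      (abs_multiplesCount_sub_le h.modulus_pos hk hkq n n)
  have hweight : -(c.weight.natAbs : ℝ) ≤
      if n ≡ 1 [MOD c.modulus] then (c.weight : ℝ) else 0 := by
    rw [Nat.cast_natAbs, Int.cast_abs]
    split_ifs
    · exact neg_abs_le _
    · simp
  have herror : (c.error + c.weight.natAbs : ℝ) ≤ c.totalSteps := mod_cast h.error_le
  rw [steps_eq_totalSteps (fun e he => (h.thresholds_mem e he).2) hge]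
  linarith [h.sum_abs_balancedCoeffs_le]

lemma IsValid.sum_mul_log_div_le (h : c.IsValid) :
    (c.balancedCoeffs.map fun e => e.2 * (log e.1 / e.1)).sum ≤ log 2 * c.logSum / 2 ^ 14 := by
  have hterm (e : ℕ × ℤ) (he : e ∈ c.coeffs) : (e.2 : ℝ) * (log e.1 / e.1) ≤
      log 2 / 2 ^ 14 * ((e.2 * floorLogTwo e.1 14 + max (e.2 : ℝ) 0) / e.1) := by
    have hk := (h.coeffs_coprime e he).1
    obtain ⟨hle, hlt⟩ := floorLogTwo_mul_le_log hk 14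
    rw [← mul_div_assoc, ← mul_div_assoc]
    refine div_le_div_of_nonneg_right ?_ e.1.cast_nonneg
    rw [div_mul_eq_mul_div, le_div_iff₀ (by positivity)]
    rcases le_total (e.2 : ℝ) 0 with h0 | h0
    · rw [max_eq_right h0]
      nlinarith
    · rw [max_eq_left h0]
      nlinarith
  have hcast : (c.logSum : ℝ) = (c.coeffs.map fun e =>
      (e.2 * floorLogTwo e.1 14 + max (e.2 : ℝ) 0) / e.1).sum := by
    simp [logSum, Rat.cast_list_sum, Function.comp_def]
  rw [hcast, mul_div_right_comm, ← List.sum_map_mul_left]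
  simpa [balancedCoeffs, Function.comp_def] using List.sum_le_sum hterm

lemma IsValid.slope_add_le (h : c.IsValid) :
    (c.slope : ℝ) + log 2 * c.logSum / 2 ^ 14 / c.modulus +
      27 / 25 * (c.thresholds.map fun e => (e.2 : ℝ) / e.1).sum ≤ 0 := by
  have hcast : (c.thresholds.map fun e => (e.2 : ℝ) / e.1).sum =
      ((c.thresholds.map fun e => (e.2 : ℚ) / e.1).sum : ℚ) := by
    simp [Rat.cast_list_sum, Function.comp_def]
  have h₁ := (Rat.cast_le (K := ℝ)).2 (h.slope_le _ List.mem_cons_self)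
  have h₂ := (Rat.cast_le (K := ℝ)).2 (h.slope_le _ (List.mem_cons_of_mem _ List.mem_cons_self))
  rw [hcast]
  push_cast at h₁ h₂ ⊢
  have hl := log_two_gt_d9
  have hu := log_two_lt_d9
  have hL : log 2 * c.logSum / 2 ^ 14 / c.modulus = log 2 * (c.logSum / (2 ^ 14 * c.modulus)) := by
    ring
  rw [mul_div_assoc] at h₁ h₂
  rw [hL]
  rcases le_total 0 ((c.logSum : ℝ) / (2 ^ 14 * c.modulus)) with _ | _ <;> nlinarith

theorem IsValid.slope_mul_sub_le (h : c.IsValid) {r x : ℕ} (hr : r.Coprime c.modulus)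
    (hx : 0 < x) (hpsi : ∀ y < x, ψ y ≤ 27 / 25 * y) :
    c.slope * x - c.error * (log x + 1) ≤ c.weight * psiMod c.modulus r x := by
  have hmain := le_mul_psiMod_add_sum_list (h := fun n => (c.steps n : ℝ)) h.modulus_pos hr hx
    h.balancedCoeffs_coprime sum_balancedCoeffs_div (fun n => Nat.cast_nonneg _)
    (fun m n hmn => Nat.cast_le.2 (steps_mono hmn))
    fun n hn hcop => (lt_or_ge n c.bound).elim (h.sum_mul_multiplesCount_le_of_lt hcop hn)
      h.sum_mul_multiplesCount_le_of_ge
  have hsteps : ∑ N ∈ Icc 1 x, Λ N * c.steps (x / N) ≤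
      27 / 25 * (c.thresholds.map fun e => (e.2 : ℝ) / e.1).sum * x := by
    rw [sum_vonMangoldt_mul_steps c x fun e he => zero_lt_two.trans_le (h.thresholds_mem e he).1,
      ← List.sum_map_mul_left, ← List.sum_map_mul_right]
    refine List.sum_le_sum fun e he => ?_
    have hdiv : ψ ((x / e.1 : ℕ) : ℝ) ≤ 27 / 25 * (x / e.1) :=
      (hpsi _ (Nat.div_lt_self hx (h.thresholds_mem e he).1)).trans
        (by gcongr; exact Nat.cast_div_le)
    calc (e.2 : ℝ) * ψ ((x / e.1 : ℕ) : ℝ) ≤ e.2 * (27 / 25 * (x / e.1)) := by gcongr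
      _ = 27 / 25 * (e.2 / e.1) * x := by ring
  have hlog : (c.balancedCoeffs.map fun e => e.2 * (log e.1 / e.1)).sum / c.modulus * x ≤
      log 2 * c.logSum / 2 ^ 14 / c.modulus * x := by
    gcongr
    exact h.sum_mul_log_div_le
  have herror : (c.balancedCoeffs.map fun e => |e.2|).sum * (log x + 1) ≤
      c.error * (log x + 1) := by
    gcongr
    exact h.sum_abs_balancedCoeffs_le
  have hslope := mul_le_mul_of_nonneg_right h.slope_add_le x.cast_nonneg (α := ℝ)
  rw [neg_div, neg_mul] at hmain
  linarith

/-- Lower bounds for `ψ(x; 3, r)`. -/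
def chebyshevThree : ChebyshevCertificate where
  modulus := 3
  weight := 20
  coeffs :=
    [(1, 20), (2, -20), (5, -20), (7, -20), (10, 20), (11, -20), (13, -20), (14, 19), (17, -19),
    (19, -20), (22, 20), (23, -20), (26, 20), (28, -12), (29, -20), (31, -6), (34, 19), (35, 7),
    (37, -20), (43, -16), (44, 1), (46, 20), (47, -12), (52, -12), (53, -12), (55, -4), (56, 13),
    (58, -1), (59, -12)]
  thresholds :=
    [(31, 1), (43, 4), (59, 7), (73, 2), (179, 8), (197, 7), (229, 2), (599, 9), (1619, 8),
    (1699, 1), (4663, 9), (30739, 3), (32768, 405)]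
  blocks := 10923
  slope := 9275 / 1000
  error := 446

/-- Lower bounds for `ψ(x; 4, r)`. -/
def chebyshevFour : ChebyshevCertificate where
  modulus := 4
  weight := 20
  coeffs :=
    [(1, 20), (3, -20), (5, -20), (7, -20), (11, -20), (13, -20), (15, 20), (17, -20), (19, -20),
    (21, 20), (23, -20), (25, -5), (29, -15), (31, -21), (33, 19), (35, 13), (37, -19), (39, 20),
    (41, -20), (43, -12), (45, -1), (47, -20), (49, 1), (51, 20), (53, -21), (55, 14), (57, 1),
    (59, -55)]
  thresholds :=
    [(79, 14), (83, 20), (271, 5), (383, 4), (409, 1), (503, 13), (523, 20), (751, 1), (32768, 440)]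
  blocks := 8192
  slope := 9148 / 1000
  error := 498

/-- Lower bounds for `ψ(x; 5, r)`. -/
def chebyshevFive : ChebyshevCertificate where
  modulus := 5
  weight := 20
  coeffs :=
    [(1, 20), (2, -20), (3, -20), (6, 20), (7, -20), (11, -20), (13, -20), (14, 20), (17, -20),
    (19, -20), (21, 20), (22, 20), (23, -20), (26, 20), (29, -20), (31, -20), (33, 20), (34, 20),
    (37, -20), (38, 14), (39, 20), (41, -20), (42, -20), (43, -14), (46, 20), (47, -20), (51, 20),
    (53, -20), (54, -2), (56, -4), (57, 20), (58, 20), (59, -18), (61, -16), (62, 20), (66, -20),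
    (67, -20), (68, -3), (69, 20), (71, -20), (73, -17), (74, 7), (76, 6), (77, 20), (78, -20),
    (79, -7), (82, 17), (83, -20), (86, 14), (87, 9), (89, -20), (91, 13), (92, -3), (93, 20),
    (94, 20), (96, 5), (97, -12), (101, -18), (102, -17), (103, -20), (106, 18), (107, -14),
    (108, -3), (109, -20), (111, 22), (112, 3), (113, -15), (114, -14), (117, 1), (118, 18),
    (119, 11), (121, -2), (122, 14), (123, 20), (124, 2), (126, -18), (127, -18), (129, 21),
    (133, 20), (134, 13), (136, 3), (137, -20), (138, -20), (139, -13), (141, 8), (142, 20),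
    (144, -2), (146, 17), (149, -18), (151, -8), (152, -7), (154, -20), (156, -1), (157, -13),
    (158, 4), (159, 14), (161, 19), (163, -3), (164, 8), (166, 17), (167, -18), (168, 1),
    (171, -11), (173, -1), (174, -20), (176, -12), (177, 18), (178, 17), (179, -8), (181, -2),
    (182, -12), (183, 14), (186, -22), (187, 20), (188, -2), (189, 1), (191, -3), (193, -5),
    (194, 12), (197, -16), (199, -8), (201, 7), (202, 18), (203, 4), (206, 22), (208, 1),
    (209, 20), (211, -5), (212, 2), (213, 17), (214, 10), (216, 5), (217, 5), (218, 19), (219, 6),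
    (221, 20), (222, -11), (223, -2), (224, 1), (226, 14), (227, -2), (229, -12), (231, -18),
    (233, -17), (234, -1), (236, -2), (237, 5), (238, -10), (239, -8), (241, -15), (242, -10),
    (246, -18), (247, 4), (248, -6), (249, 8), (251, -19), (252, 1), (253, 18), (254, 18),
    (257, -2), (258, -22), (259, 4), (261, 10), (262, 3), (263, -12), (264, -4), (266, -18),
    (267, 3), (268, 4), (269, -18), (271, -13), (273, -8), (274, 22), (276, 4), (277, 1),
    (278, 14), (279, -3), (281, -11), (282, -12), (283, -14), (284, -3), (286, 1), (287, 3),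
    (289, -1), (291, 17), (292, 4), (293, -15), (294, -10), (296, 13), (297, -1), (298, 11),
    (299, 1)]
  thresholds :=
    [(182, 1), (191, 4), (192, 1), (197, 4), (227, 1), (233, 2), (238, 1), (239, 1), (273, 2),
    (278, 1), (281, 7), (286, 1), (288, 1), (291, 4), (293, 1), (311, 8), (367, 4), (499, 1),
    (839, 6), (864, 2), (1223, 4), (1553, 8), (1619, 2), (1709, 1), (2037, 2), (2411, 3),
    (2963, 2), (3038, 1), (3329, 1), (3797, 5), (6203, 13), (11351, 3), (11789, 3), (13183, 18),
    (32768, 2306)]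
  blocks := 6554
  slope := 4654 / 1000
  error := 2405

/-- Lower bounds for `ψ(x; 6, r)`. -/
def chebyshevSix : ChebyshevCertificate where
  modulus := 6
  weight := 20
  coeffs :=
    [(1, 20), (5, -20), (7, -20), (11, -20), (13, -20), (17, -20), (19, -20), (23, -20), (29, -20),
    (31, -20), (35, 20), (37, -20), (41, -20), (43, -20), (47, -20), (53, -20), (55, 14),
    (59, -20), (61, -25), (65, 19), (67, -10), (71, -20), (73, -18), (77, 13), (79, -20),
    (83, -26), (85, 20), (89, -19), (91, 10), (95, 28), (97, -35), (101, -18), (103, -37),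
    (107, -17), (109, -51), (113, -20), (115, -27), (119, -100)]
  thresholds :=
    [(73, 1), (269, 19), (281, 14), (373, 6), (379, 20), (385, 7), (439, 9), (463, 1), (1129, 16),
    (1297, 3), (1303, 20), (4663, 16), (11489, 12), (11495, 2), (22717, 4), (24151, 9),
    (32768, 749)]
  blocks := 5462
  slope := 9205 / 1000
  error := 888

/-- Lower bounds for `ψ(x; 8, r)`. -/
def chebyshevEight : ChebyshevCertificate where
  modulus := 8
  weight := 20
  coeffs :=
    [(1, 20), (3, -20), (5, -20), (7, -20), (11, -20), (13, -20), (15, 20), (17, -20), (19, -20),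
    (21, 20), (23, -20), (29, -20), (31, -20), (33, 20), (35, 20), (37, -20), (39, 20), (41, -20),
    (43, -20), (47, -20), (51, 19), (53, -20), (55, 20), (57, 20), (59, -19), (61, -20), (63, -2),
    (65, 20), (67, -20), (69, 20), (71, -18), (73, -20), (75, -1), (77, 20), (79, -20), (83, -20),
    (85, 12), (87, 18), (89, -20), (91, 20), (93, 8), (95, 8), (97, -20), (99, -5), (101, -11),
    (103, -3), (105, -17), (107, -12), (109, -6), (111, 20), (113, -20), (115, 19), (117, -5),
    (119, 8), (123, 20), (125, -1), (127, -13), (129, 20), (131, -20), (133, 15), (135, -6),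
    (137, -20), (139, -20), (141, 17), (143, 7), (145, 20), (149, -7), (151, 4), (153, 1),
    (155, 11), (157, -19), (159, 11), (161, 20), (163, -11), (165, -35), (167, -12), (169, 1),
    (171, 1), (173, -4), (175, -7), (177, 7), (179, -19), (181, -19), (183, 28), (185, 18),
    (187, 20), (189, 2), (191, -17), (193, -6), (195, -20), (197, -20), (199, -20), (201, 20),
    (203, 4), (205, 20), (207, -1), (209, -7), (211, -20), (213, 18), (217, -9), (219, 16),
    (221, 13), (223, 1), (225, -13), (229, -13), (231, -20), (235, 21), (237, 21), (239, -19),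
    (241, 5), (247, 20), (249, 16), (251, -20), (253, 7), (255, -11), (257, 2), (259, 20),
    (261, -6), (263, -19), (265, 13), (267, 20), (271, -17), (273, -32), (277, -13), (279, 13),
    (281, 2), (283, -25), (285, -14), (287, 20), (289, -2), (291, 1), (293, -7), (295, 14),
    (297, -3), (299, -9)]
  thresholds :=
    [(103, 3), (169, 1), (181, 1), (191, 1), (239, 1), (263, 1), (271, 3), (277, 1), (293, 7),
    (357, 4), (389, 7), (397, 20), (429, 2), (457, 15), (487, 2), (587, 9), (827, 1), (1567, 9),
    (1663, 1), (2275, 8), (2357, 1), (2437, 1), (5313, 1), (6577, 2), (10695, 1), (10973, 18),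
    (11131, 17), (11213, 3), (32611, 6), (32768, 1871)]
  blocks := 4096
  slope := 4627 / 1000
  error := 1998

/-- Lower bounds for `ψ(x; 10, r)`. -/
def chebyshevTen : ChebyshevCertificate where
  modulus := 10
  weight := 20
  coeffs :=
    [(1, 20), (3, -20), (7, -20), (11, -20), (13, -20), (17, -20), (19, -20), (21, 20), (23, -20),
    (29, -20), (31, -20), (33, 20), (37, -20), (39, 20), (41, -20), (43, -20), (47, -20), (51, 19),
    (53, -20), (57, 20), (59, -20), (61, -19), (67, -20), (69, 16), (71, -20), (73, -20), (77, 20),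
    (79, -16), (83, -20), (87, 12), (89, -20), (91, 20), (93, 20), (97, -12), (99, -1), (101, -20),
    (103, -27), (107, -20), (109, -19), (111, 20), (113, -13), (119, 20), (123, 4), (127, -20),
    (129, 17), (131, -20), (133, 37), (137, -20), (139, -17), (141, 11), (143, 20), (149, -20),
    (151, -11), (157, -20), (159, 17), (161, 20), (163, -21), (167, -20), (169, 2), (171, -6),
    (173, -18), (177, 20), (179, -19), (181, -13), (183, 19), (187, 18), (191, -20), (193, -20),
    (197, -18), (199, -20), (201, 14), (203, 19), (207, 4), (209, 20), (211, -20), (213, 17),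
    (217, 18), (219, 20), (221, 21), (223, -16), (227, -18), (229, -20), (231, -19), (233, -20),
    (237, 14), (239, -20), (241, -17), (243, -9), (247, 9), (249, 20), (251, -18), (253, 23),
    (257, -12), (259, 20), (261, 6), (263, -15), (267, 18), (269, -23), (271, -17), (273, -19),
    (277, -15), (279, -9), (281, -20), (283, -20), (287, 15), (289, -9), (291, 12), (293, -20),
    (297, -8), (299, 1), (301, 18), (303, 19), (307, -9), (309, 5), (311, -18), (313, -20),
    (317, -14), (321, 20), (323, 20), (327, 19), (329, 5), (331, -19), (337, -21), (339, 33),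
    (341, 19), (347, -20), (349, -1), (351, -1), (353, -20), (357, -19), (359, 1), (361, -5),
    (367, -18), (369, 14), (371, 8), (373, -20), (377, 20), (379, -2), (381, 5), (383, -20),
    (387, 1), (389, 2), (391, 2), (393, 14), (397, -18), (399, -147)]
  thresholds :=
    [(133, 1), (251, 1), (271, 1), (331, 1), (509, 5), (647, 17), (661, 3), (701, 3), (907, 9),
    (967, 10), (977, 20), (997, 16), (1061, 6), (1531, 1), (1753, 1), (2083, 11), (2093, 1),
    (2113, 20), (2153, 18), (2293, 16), (2473, 1), (3581, 2), (10513, 5), (13033, 3), (13043, 20),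
    (13093, 18), (13103, 20), (13183, 1), (32768, 2324)]
  blocks := 3277
  slope := 4664 / 1000
  error := 2535

/-- Lower bounds for `ψ(x; 7, r)`. -/
def chebyshevSeven : ChebyshevCertificate where
  modulus := 7
  weight := 20
  coeffs :=
    [(1, 20), (2, -20), (3, -20), (5, -20), (6, 20), (10, 20), (11, -20), (13, -20), (15, 20),
    (17, -20), (19, -20), (22, 20), (23, -20), (26, 20), (29, -20), (30, -20), (31, -20), (33, 20),
    (34, 20), (37, -20), (38, 20), (39, 20), (40, -1), (41, -20), (43, -20), (46, 17), (47, -19),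
    (51, 20), (53, -17), (55, 20), (57, 20), (58, 20), (59, -20), (61, -20), (62, 19), (65, 19),
    (66, -20), (67, -20), (69, 5), (71, -20), (72, -4), (73, -20), (74, 20), (76, -5), (78, -20),
    (79, -16), (80, 1), (82, 20), (85, 20), (86, 17), (87, 20), (89, -20), (90, 1), (92, 3),
    (93, 9), (94, 19), (95, 16), (97, -20), (100, -7), (101, -20), (102, -20), (103, -20),
    (106, 6), (107, -1), (109, -16), (110, -20), (111, 20), (113, -9), (114, -17), (115, 9),
    (118, 19), (120, -4), (122, 2), (123, 19), (124, 1), (125, 1), (127, -14), (129, 7),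
    (130, -20), (131, -20), (134, 20), (137, -18), (138, -2), (139, -20), (141, 19), (142, 11),
    (143, 8), (145, 20), (146, 3), (149, -11), (150, -25), (151, -16), (152, 5), (153, -13),
    (155, 19), (158, 16), (159, 11), (160, -1), (162, 1), (163, -20), (165, -20), (166, 1),
    (167, -1), (169, 1), (170, -18), (171, -3), (172, 4), (173, -12), (174, -8), (176, -7),
    (177, 18), (178, 3), (179, -15), (180, 1), (181, -16), (183, 10), (184, -11), (185, -2),
    (186, -7), (187, -1), (190, -11), (191, -3), (193, -19), (194, 19), (195, -17), (197, -7),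
    (198, 1), (200, 9), (201, 11), (202, 18), (205, 19), (206, 23), (207, 13), (209, 14),
    (211, -15), (213, 20), (214, 2), (215, 3), (216, 1), (218, 3), (219, 9), (220, 8), (221, 20),
    (222, -1), (223, -9), (225, 1), (226, 9), (227, 1), (228, 2), (230, -6), (232, 4), (233, 4),
    (235, 17), (236, -11), (237, 16), (239, -11), (240, 1), (241, -5), (242, -5), (243, -2),
    (244, 17), (246, -17), (247, 13), (248, 8), (249, -3), (250, 5), (251, -16), (253, 11),
    (254, 14), (255, -1), (257, 1), (258, -1), (260, 2), (261, -5), (262, 28), (263, -6),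
    (264, -3), (265, 17), (267, 20), (268, -2), (269, -8), (270, 2), (271, -13), (272, 5),
    (274, 13), (275, -3), (276, -3), (277, -18), (278, 20), (281, -5), (282, -17), (283, -15),
    (284, 5), (285, -16), (286, -20), (288, 4), (289, -4), (290, -20), (291, 16), (292, 15),
    (293, -8), (295, 18), (296, -14), (297, -19), (298, 19), (299, 16), (300, 26)]
  thresholds :=
    [(127, 1), (169, 1), (173, 1), (179, 3), (186, 1), (193, 1), (200, 1), (246, 2), (258, 1),
    (269, 1), (270, 2), (272, 2), (283, 1), (307, 2), (367, 11), (464, 1), (569, 7), (641, 7),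
    (743, 1), (757, 1), (967, 1), (1009, 11), (1117, 1), (1321, 11), (1326, 1), (1451, 1),
    (1549, 1), (2141, 2), (2484, 6), (2689, 10), (4153, 6), (4524, 2), (8178, 5), (8360, 5),
    (16543, 1), (16592, 1), (25621, 20), (25628, 9), (33359, 9), (33366, 9), (54403, 12),
    (65536, 2449)]
  blocks := 9363
  slope := 3002 / 1000
  error := 2601

/-- Lower bounds for `ψ(x; 9, r)`. -/
def chebyshevNine : ChebyshevCertificate where
  modulus := 9
  weight := 20
  coeffs :=
    [(1, 20), (2, -20), (5, -20), (7, -20), (10, 20), (11, -20), (13, -20), (14, 20), (17, -20),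
    (19, -20), (22, 20), (23, -20), (26, 20), (29, -20), (31, -20), (34, 20), (35, 20), (37, -20),
    (38, 20), (41, -20), (43, -20), (44, -3), (46, 20), (47, -20), (53, -17), (55, 20), (58, 19),
    (59, -20), (61, -20), (62, 20), (65, 20), (67, -19), (70, -20), (71, -20), (73, -20), (74, 17),
    (76, -1), (77, 20), (79, -20), (82, 20), (83, -17), (85, 12), (86, 20), (88, 3), (89, -20),
    (91, 20), (94, 20), (95, 18), (97, -20), (100, -4), (101, -20), (103, -11), (104, -6),
    (106, 17), (107, -20), (109, -15), (110, -21), (113, -13), (115, 20), (116, 1), (118, 20),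
    (119, 4), (122, 14), (127, -20), (128, 2), (130, -21), (131, -14), (133, 20), (134, 19),
    (136, -10), (137, -6), (139, -19), (140, -1), (142, 20), (143, 20), (145, 15), (146, 19),
    (148, 3), (149, -18), (151, -20), (152, 2), (154, -24), (155, 20), (157, -20), (158, 20),
    (160, -2), (161, 19), (164, -6), (166, 17), (167, -20), (169, -2), (170, -15), (173, -13),
    (175, -19), (178, 20), (179, -16), (181, -20), (182, -20), (184, -1), (185, 19), (187, -6),
    (188, -7), (190, -16), (191, -16), (193, 4), (194, 15), (197, -10), (199, -20), (200, 4),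
    (202, 12), (203, 7), (205, 3), (206, 11), (208, 6), (209, 9), (211, -12), (212, -9), (214, 20),
    (215, 4), (217, 17), (218, -5), (220, 3), (221, 10), (223, 1), (224, -16), (226, 16),
    (227, 10), (229, -20), (230, -11), (232, 2), (235, 17), (238, -4), (241, -8), (242, 5),
    (244, 7), (245, 2), (247, 21), (248, 1), (250, -6), (251, -9), (253, 12), (254, 22), (256, 2),
    (257, -5), (259, 3), (260, 3), (262, 14), (263, -13), (265, 9), (266, -18), (269, -13),
    (272, 13), (274, 22), (275, 1), (277, -7), (278, 23), (280, 5), (281, -16), (283, -16),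
    (286, -27), (287, 21), (289, -9), (290, -12), (292, 1), (293, -11), (295, -5), (298, -3),
    (299, 8)]
  thresholds :=
    [(109, 1), (163, 1), (190, 2), (251, 4), (260, 2), (263, 3), (269, 4), (278, 4), (287, 1),
    (317, 1), (353, 1), (367, 3), (385, 13), (406, 5), (419, 7), (439, 2), (457, 4), (631, 3),
    (653, 2), (1597, 1), (1741, 1), (1777, 9), (1840, 2), (1867, 20), (2129, 3), (2647, 4),
    (2999, 1), (3631, 1), (4129, 7), (13690, 8), (20219, 10), (37397, 8), (48823, 9), (72907, 4),
    (100459, 1), (165073, 8), (262144, 2191)]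
  blocks := 29128
  slope := 3049 / 1000
  error := 2331

/-- Upper bounds for `ψ(x; 1, r)`, the weight being negative. -/
def chebyshevOne : ChebyshevCertificate where
  modulus := 1
  weight := -20
  coeffs :=
    [(1, -20), (2, 20), (3, 20), (5, 20), (6, -20), (7, 20), (10, -20), (11, 20), (13, 20),
    (14, -20), (15, -20), (17, 20), (19, 20), (21, -20), (22, -20), (23, 20), (26, -20), (29, 20),
    (30, 20), (31, 15), (33, -15), (34, -20), (35, -20), (37, 19), (38, -19), (39, -20), (41, 20),
    (42, 20), (43, 20), (46, -20), (47, 20), (51, -20), (53, 20), (55, -20), (57, -20), (58, -20),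
    (59, 20), (61, 4), (65, -20), (66, 15), (67, 11), (68, 1), (69, -11), (70, 20), (71, 20),
    (74, -18), (75, 9), (76, 6), (77, -17), (78, 20), (79, 3), (82, -3), (84, -1), (85, -2),
    (86, -17), (87, -19), (89, 2), (91, -2), (93, -15), (94, -20), (95, -20), (97, 20), (99, -5),
    (101, 20), (102, 20), (103, 16), (104, 2), (105, 15), (106, -13), (110, 5), (111, -2),
    (112, 1), (114, 12), (117, 3), (122, -4), (123, -20), (124, -15), (127, 1), (128, 1),
    (129, -2), (130, 20), (134, -11), (137, 4), (138, 11), (140, -4), (142, -14), (143, -5),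
    (145, -20), (148, -2), (149, 11), (151, 11), (152, 2), (154, 2), (159, -3), (161, -20),
    (163, 3), (165, 15), (167, 12), (169, 5), (170, 1), (174, 26), (175, 1), (177, -10), (181, 2),
    (187, -2), (190, 19), (191, 12), (195, 5), (201, -5), (202, -11), (203, -9), (205, -1),
    (206, -16), (208, -2), (210, -15), (212, -2), (213, -8), (215, -3), (217, -15), (221, -5),
    (223, 10), (227, 20), (228, 2), (230, 4), (231, 2), (239, 11), (242, 3), (245, 7), (246, 2),
    (258, -1), (259, -1), (265, -4), (269, -2), (271, 3), (273, 3), (282, 4), (285, 12), (295, -1),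
    (296, 1), (298, -5), (302, -8), (304, -2), (305, -4), (315, 2), (327, -3), (334, -9),
    (335, -10), (345, -4), (347, 13), (349, 2), (350, 1), (359, 12), (368, 1), (372, 9), (382, -1),
    (388, -6), (390, -7), (399, 1)]
  thresholds :=
    [(87, 1), (143, 1), (209, 5), (215, 14), (304, 1), (345, 1), (418, 1), (533, 18), (534, 2),
    (539, 1), (726, 1), (1150, 3), (1180, 3), (1183, 3), (1185, 3), (1200, 1), (1208, 1),
    (3451, 1), (3456, 1), (3689, 1), (5635, 1), (8993, 14), (9612, 2), (11859, 3), (16059, 16),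
    (43778, 7), (131072, 1634)]
  blocks := 131072
  slope := -20355 / 1000
  error := 1720

section Validity

set_option maxRecDepth 10000

lemma isValid_chebyshevThree : chebyshevThree.IsValid := by constructor <;> decide +kernel

lemma isValid_chebyshevFour : chebyshevFour.IsValid := by constructor <;> decide +kernel

lemma isValid_chebyshevFive : chebyshevFive.IsValid := by constructor <;> decide +kernel

lemma isValid_chebyshevSix : chebyshevSix.IsValid := by constructor <;> decide +kernel

lemma isValid_chebyshevSeven : chebyshevSeven.IsValid := by constructor <;> decide +kernel

lemma isValid_chebyshevEight : chebyshevEight.IsValid := by constructor <;> decide +kernel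

lemma isValid_chebyshevNine : chebyshevNine.IsValid := by constructor <;> decide +kernel

lemma isValid_chebyshevTen : chebyshevTen.IsValid := by constructor <;> decide +kernel

lemma isValid_chebyshevOne : chebyshevOne.IsValid := by constructor <;> decide +kernel

end Validity

end ChebyshevCertificate

section PsiBound

open Chebyshev ChebyshevCertificate

/-- The least common multiple of the `2 ^ t` consecutive numbers starting with `a`, computed by
bisection. -/
def lcmBlock (a : ℕ) : ℕ → ℕ
  | 0 => a
  | t + 1 => (lcmBlock a t).lcm (lcmBlock (a + 2 ^ t) t)

/-- Checks `ψ n ≤ 27 / 25 * n` for `m < n ≤ 2 ^ 14`, where `L = lcmUpto m`, in blocks whose length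
is about `m / 32`. The number `1.5581` is slightly less than `27 / 25 / log 2`. -/
def checkPsiLe : ℕ → ℕ → ℕ → Bool
  | 0, m, _ => 2 ^ 14 ≤ m
  | fuel + 1, m, L =>
    let L' := L.lcm (lcmBlock (m + 1) (m.log2 - 5))
    L' ≤ 2 ^ (15581 * (m + 1) / 10000) && checkPsiLe fuel (m + 2 ^ (m.log2 - 5)) L'

lemma lcmBlock_eq_lcm (a t : ℕ) : lcmBlock a t = (Ico a (a + 2 ^ t)).lcm id := by
  induction t generalizing a with
  | zero => simp [lcmBlock, Finset.lcm]
  | succ t ih =>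
    have hunion : Ico a (a + 2 ^ (t + 1)) =
        Ico a (a + 2 ^ t) ∪ Ico (a + 2 ^ t) (a + 2 ^ t + 2 ^ t) := by
      rw [Ico_union_Ico_eq_Ico (by simp) (by simp), pow_succ, mul_two, add_assoc]
    rw [lcmBlock, ih, ih, hunion, lcm_union]
    rfl

lemma lcmUpto_add_two_pow (m t : ℕ) :
    Nat.lcmUpto (m + 2 ^ t) = (Nat.lcmUpto m).lcm (lcmBlock (m + 1) t) := by
  have hunion : Icc 1 (m + 2 ^ t) = Icc 1 m ∪ Ico (m + 1) (m + 1 + 2 ^ t) := by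
    ext i
    have := Nat.two_pow_pos t
    simp only [mem_Icc, mem_union, mem_Ico]
    omega
  rw [lcmBlock_eq_lcm, Nat.lcmUpto, hunion, lcm_union]
  rfl

lemma psi_le_of_lcmUpto_le {m n : ℕ}
    (h : Nat.lcmUpto n ≤ 2 ^ (15581 * (m + 1) / 10000)) : ψ n ≤ 27 / 25 * (m + 1) := by
  have hexp : ((15581 * (m + 1) / 10000 : ℕ) : ℝ) ≤ 15581 * (m + 1) / 10000 :=
    Nat.cast_div_le.trans_eq (by push_cast; ring)
  calc ψ n = log (Nat.lcmUpto n) := psi_eq_log_lcmUpto n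
    _ ≤ log (2 ^ (15581 * (m + 1) / 10000) : ℕ) :=
      log_le_log (mod_cast Nat.lcmUpto_pos n) (mod_cast h)
    _ = (15581 * (m + 1) / 10000 : ℕ) * log 2 := by push_cast; exact log_pow _ _
    _ ≤ 15581 * (m + 1) / 10000 * 0.6931471808 := by gcongr; exact log_two_lt_d9.le
    _ ≤ 27 / 25 * (m + 1) := by linarith [m.cast_nonneg (α := ℝ)]

lemma psi_le_of_checkPsiLe {fuel m : ℕ} (h : checkPsiLe fuel m (Nat.lcmUpto m) = true) {n : ℕ}
    (hmn : m < n) (hn : n ≤ 2 ^ 14) : ψ n ≤ 27 / 25 * n := by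
  induction fuel generalizing m with
  | zero =>
    simp only [checkPsiLe, decide_eq_true_eq] at h
    omega
  | succ fuel ih =>
    simp only [checkPsiLe, ← lcmUpto_add_two_pow, Bool.and_eq_true, decide_eq_true_eq] at h
    rcases le_or_gt n (m + 2 ^ (m.log2 - 5)) with hn' | hn'
    · calc ψ n ≤ ψ ((m + 2 ^ (m.log2 - 5) : ℕ) : ℝ) := psi_mono (mod_cast hn')
        _ ≤ 27 / 25 * (m + 1) := psi_le_of_lcmUpto_le h.1
        _ ≤ 27 / 25 * n := by gcongr; exact_mod_cast hmn
    · exact ih h.2 hn'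

set_option maxRecDepth 10000 in
lemma psi_le_of_le_two_pow {n : ℕ} (hn : n ≤ 2 ^ 14) : ψ n ≤ 27 / 25 * n := by
  rcases le_or_gt n 1 with h | h
  · rw [psi_eq_zero_of_le_one (mod_cast h)]
    positivity
  · exact psi_le_of_checkPsiLe (fuel := 319) (m := 1)
      (by decide +kernel : checkPsiLe 319 1 1 = true) h hn

lemma psiMod_one (r x : ℕ) : psiMod 1 r x = ψ x := by
  rw [psiMod, filter_true_of_mem fun n _ => Nat.modEq_one, psi, Nat.floor_natCast]
  rfl

lemma log_le_div_add_log_sub_one {x y : ℝ} (hx : 0 < x) (hy : 0 < y) :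
    log x ≤ x / y + log y - 1 := by
  have := log_le_sub_one_of_pos (div_pos hx hy)
  rw [log_div hx.ne' hy.ne'] at this
  linarith

lemma psi_le_of_forall_lt {n : ℕ} (hn : 0 < n) (h : ∀ m < n, ψ m ≤ 27 / 25 * m) :
    ψ n ≤ 1.01775 * n + 86 * (log n + 1) := by
  have := isValid_chebyshevOne.slope_mul_sub_le (Nat.coprime_one_right 0) hn h
  rw [show chebyshevOne.modulus = 1 from rfl, psiMod_one] at this
  norm_num [chebyshevOne] at this
  linarith

theorem psi_le_mul (n : ℕ) : ψ n ≤ 27 / 25 * n := by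
  induction n using Nat.strong_induction_on with
  | _ n ih =>
    rcases le_or_gt n (2 ^ 14) with hn | hn
    · exact psi_le_of_le_two_pow hn
    · have hpos : 0 < n := hn.trans' (by norm_num)
      have hlog : log n ≤ n / 2 ^ 14 + log (2 ^ 14) - 1 :=
        log_le_div_add_log_sub_one (mod_cast hpos) (by norm_num)
      have hcast : (2 : ℝ) ^ 14 < n := mod_cast hn
      rw [log_pow] at hlog
      have := psi_le_of_forall_lt hpos ih
      push_cast at hlog
      linarith [log_two_lt_d9]

theorem psi_le_add_log {n : ℕ} (hn : 0 < n) : ψ n ≤ 1.01775 * n + 86 * (log n + 1) :=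
  psi_le_of_forall_lt hn fun m _ => psi_le_mul m

end PsiBound

section Gaps

/-- `n` is a gap of the numerical semigroup `⟨a, b⟩`. -/
def IsGap (a b n : ℕ) : Prop := ¬ ∃ u v : ℕ, n = a * u + b * v

noncomputable instance (a b : ℕ) : DecidablePred (IsGap a b) := Classical.decPred _

/-- The totatives of `a`, one in each invertible residue class modulo `a`. -/
def totatives (a : ℕ) : Finset ℕ := {v ∈ range a | a.Coprime v}

variable {a b n : ℕ}

lemma isGap_iff (ha : 0 < a) (h : a.Coprime b) :
    IsGap a b n ↔ ∃ v < a, n ≡ b * v [MOD a] ∧ n < b * v := by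
  constructor
  · intro hgap
    obtain ⟨v, hva, hv⟩ := Nat.exists_mul_mod_eq_of_coprime n h.symm ha.ne'
    refine ⟨v, hva, hv.symm, lt_of_not_ge fun hle => hgap ?_⟩
    obtain ⟨u, hu⟩ := (Nat.modEq_iff_dvd' hle).1 hv
    exact ⟨u, v, by omega⟩
  · rintro ⟨v, hva, hv, hlt⟩ ⟨u, w, rfl⟩
    have hwv : w < v := lt_of_mul_lt_mul_left ((Nat.le_add_left _ _).trans_lt hlt) b.zero_le
    have hmod : b * w ≡ b * v [MOD a] := by simpa [Nat.ModEq] using hv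
    exact hwv.ne ((hmod.cancel_left_of_coprime h).eq_of_lt_of_lt (hwv.trans hva) hva)

lemma isGap_of_lt_of_not_dvd (hlt : n < b) (hdvd : ¬a ∣ n) : IsGap a b n := by
  rintro ⟨u, v, rfl⟩
  rcases Nat.eq_zero_or_pos v with rfl | hv
  · exact hdvd ⟨u, by ring⟩
  · exact absurd (Nat.le_mul_of_pos_right b hv) (by omega)

lemma sum_modEq_lt_le_sum_isGap {M : Type*} [AddCommMonoid M] [PartialOrder M]
    [IsOrderedAddMonoid M] (h : a.Coprime b) {f : ℕ → M} (hf : ∀ n, 0 ≤ f n) (s : Finset ℕ) :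
    ∑ v ∈ totatives a, ∑ n ∈ s with n ≡ b * v [MOD a] ∧ n < b * v, f n ≤
      ∑ n ∈ s with IsGap a b n, f n := by
  have hlt {v : ℕ} (hv : v ∈ totatives a) : v < a := mem_range.1 (mem_filter.1 hv).1
  rw [← sum_biUnion]
  · refine sum_le_sum_of_subset_of_nonneg (fun n hn => ?_) fun n _ _ => hf n
    simp only [mem_biUnion, mem_filter] at hn ⊢
    obtain ⟨v, hv, hns, hmod, hnv⟩ := hn
    exact ⟨hns, (isGap_iff ((Nat.zero_le v).trans_lt (hlt hv)) h).2 ⟨v, hlt hv, hmod, hnv⟩⟩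
  · refine fun v hv w hw hvw => disjoint_left.2 fun n hnv hnw => hvw ?_
    have hmod := (mem_filter.1 hnv).2.1.symm.trans (mem_filter.1 hnw).2.1
    exact (hmod.cancel_left_of_coprime h).eq_of_lt_of_lt (hlt hv) (hlt hw)

lemma setOf_isGap_subset_Iio (ha : 0 < a) (h : a.Coprime b) :
    {n | IsGap a b n} ⊆ Set.Iio (a * b) := by
  intro n hn
  obtain ⟨v, hva, -, hnv⟩ := (isGap_iff ha h).1 hn
  exact hnv.trans_le ((Nat.mul_le_mul_left b hva.le).trans_eq (mul_comm b a))

theorem piStar_eq_card (ha : 0 < a) (h : a.Coprime b) : piStar a b =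
    #{p ∈ range (a * b) | p.Prime ∧ ∃ v < a, p ≡ b * v [MOD a] ∧ p < b * v} := by
  rw [piStar, ← Set.ncard_coe_finset]
  congr 1
  ext p
  simp only [coe_filter, mem_range, Set.mem_ofPred_eq, ← isGap_iff ha h]
  exact ⟨fun hp => ⟨setOf_isGap_subset_Iio ha h hp.2, hp⟩, And.right⟩

lemma card_prime_isGap_le_piStar (ha : 0 < a) (h : a.Coprime b) (s : Finset ℕ) :
    #{p ∈ s | p.Prime ∧ IsGap a b p} ≤ piStar a b := by
  rw [← Set.ncard_coe_finset]
  refine Set.ncard_le_ncard (fun p hp => (mem_filter.1 hp).2) ?_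
  exact (Set.finite_Iio (a * b)).subset fun p hp => setOf_isGap_subset_Iio ha h hp.2

end Gaps

section ManySmallGaps

open Chebyshev
open scoped ArithmeticFunction.vonMangoldt

variable {a b : ℕ}

lemma psi_sub_theta_le_mul_sqrt_natCast {n : ℕ} (hn : 0 < n) : ψ n - θ n ≤ 81 / 25 * √n := by
  have hn' : (1 : ℝ) ≤ n := mod_cast hn
  have hψ {k : ℝ} (hk : 2 ≤ k) : ψ ((n : ℝ) ^ k⁻¹) ≤ 27 / 25 * √n := by
    have hle : (n : ℝ) ^ k⁻¹ ≤ √n := by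
      rw [sqrt_eq_rpow]
      exact rpow_le_rpow_of_exponent_le hn' (by rw [one_div]; gcongr)
    calc ψ ((n : ℝ) ^ k⁻¹) ≤ ψ √n := psi_mono hle
      _ = ψ ⌊√n⌋₊ := psi_eq_psi_coe_floor _
      _ ≤ 27 / 25 * ⌊√n⌋₊ := psi_le_mul _
      _ ≤ 27 / 25 * √n := by gcongr; exact Nat.floor_le (sqrt_nonneg _)
  linarith [psi_sub_theta_le_psi_add_psi_add_psi n, hψ (k := 2) le_rfl, hψ (k := 3) (by norm_num),
    hψ (k := 5) (by norm_num)]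

lemma sum_psiMod_le_sum_isGap (h : a.Coprime b) (t : ℕ) :
    ∑ v ∈ totatives a, psiMod a (b * v) (min t (b * v - 1)) ≤
      ∑ n ∈ Icc 1 t with IsGap a b n, Λ n := by
  refine le_of_eq_of_le (sum_congr rfl fun v _ => ?_)
    (sum_modEq_lt_le_sum_isGap h (fun _ => ArithmeticFunction.vonMangoldt_nonneg) (Icc 1 t))
  refine sum_congr ?_ fun _ _ => rfl
  ext n
  simp only [mem_filter, mem_Icc]
  exact ⟨fun ⟨_, hmod⟩ => ⟨by omega, hmod, by omega⟩,
    fun ⟨_, hmod, _⟩ => ⟨by omega, hmod⟩⟩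

lemma sum_isGap_vonMangoldt_le (a b t : ℕ) :
    ∑ n ∈ Icc 1 t with IsGap a b n, Λ n ≤
      ∑ p ∈ Icc 1 t with p.Prime ∧ IsGap a b p, log p + (ψ t - θ t) := by
  rw [psi_sub_theta_eq_sum_not_prime, Nat.floor_natCast,
    ← sum_filter_add_sum_filter_not {n ∈ Icc 1 t | IsGap a b n} Nat.Prime, filter_filter]
  refine add_le_add (le_of_eq ?_)
    (sum_le_sum_of_subset_of_nonneg (filter_subset_filter _ (filter_subset _ _))
      fun _ _ _ => ArithmeticFunction.vonMangoldt_nonneg)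
  refine sum_congr (filter_congr fun _ _ => and_comm) fun p hp => ?_
  exact ArithmeticFunction.vonMangoldt_apply_prime (mem_filter.1 hp).2.1

lemma pos_of_mem_totatives (ha : 2 ≤ a) {v : ℕ} (hv : v ∈ totatives a) : 0 < v := by
  refine Nat.pos_of_ne_zero fun h0 => ?_
  have := (mem_filter.1 hv).2
  rw [h0, Nat.coprime_zero_right] at this
  omega

-- As `∑ min t (b v)` is a concave function of `t`, only the end points matter.
lemma mul_le_mul_sum_min_sub {c u κ : ℝ} {t : ℕ} (ha : 2 ≤ a) (hc : 0 ≤ c) (hbt : b ≤ t)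
    (hta : t ≤ (a - 1) * b) (hκ₁ : κ ≤ c * #(totatives a) - u)
    (hκ₂ : κ ≤ c * (∑ v ∈ totatives a, v : ℕ) - u * (a - 1 : ℕ)) :
    κ * b ≤ c * (∑ v ∈ totatives a, min t (b * v) : ℕ) - u * t := by
  obtain ⟨lam, mu, hlam, hmu, hsum, ht⟩ : (t : ℝ) ∈ segment ℝ (b : ℝ) ((a - 1 : ℕ) * b : ℝ) := by
    rw [segment_eq_Icc (by exact_mod_cast hbt.trans hta)]
    exact ⟨mod_cast hbt, mod_cast hta⟩
  simp only [smul_eq_mul] at ht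
  have hmin (v) (hv : v ∈ totatives a) : b * (lam + mu * v) ≤ ((min t (b * v) : ℕ) : ℝ) := by
    have hv₁ : (1 : ℝ) ≤ v := mod_cast pos_of_mem_totatives ha hv
    have hv₂ : (v : ℝ) ≤ (a - 1 : ℕ) :=
      mod_cast Nat.le_sub_one_of_lt (mem_range.1 (mem_filter.1 hv).1)
    push_cast
    refine le_min ?_ ?_
    · calc b * (lam + mu * v) ≤ b * (lam + mu * (a - 1 : ℕ)) := by gcongr
        _ = t := by rw [← ht]; ring
    · calc b * (lam + mu * v) = b * (lam * 1 + mu * v) := by ring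
        _ ≤ b * (lam * v + mu * v) := by gcongr
        _ = b * v := by rw [← add_mul, hsum, one_mul]
  calc κ * b = (lam * κ + mu * κ) * b := by rw [← add_mul, hsum, one_mul]
    _ ≤ (lam * (c * #(totatives a) - u) +
        mu * (c * (∑ v ∈ totatives a, v : ℕ) - u * (a - 1 : ℕ))) * b := by gcongr
    _ = c * ∑ v ∈ totatives a, b * (lam + mu * v) - u * t := by
      rw [← ht, ← mul_sum, sum_add_distrib, ← mul_sum, sum_const, nsmul_eq_mul]
      push_cast
      ring
    _ ≤ c * (∑ v ∈ totatives a, min t (b * v) : ℕ) - u * t := by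
      rw [Nat.cast_sum]
      gcongr with v hv
      exact hmin v hv

variable {c e κ : ℝ} {X : ℕ}

lemma le_sum_isGap_vonMangoldt (ha : 2 ≤ a) (hb : 2 ≤ b) (h : a.Coprime b) (hc : 0 ≤ c)
    (he : 0 ≤ e)
    (hpsi : ∀ r x : ℕ, r.Coprime a → 0 < x → c * x - e * (log x + 1) ≤ psiMod a r x) {t : ℕ}
    (ht : 0 < t) (htX : t ≤ X) :
    c * (∑ v ∈ totatives a, min t (b * v) : ℕ) - #(totatives a) * (c + e * (log X + 1)) ≤
      ∑ n ∈ Icc 1 t with IsGap a b n, Λ n := by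
  refine le_trans ?_ (sum_psiMod_le_sum_isGap h t)
  rw [Nat.cast_sum, mul_sum, ← nsmul_eq_mul, ← sum_const, ← sum_sub_distrib]
  refine sum_le_sum fun v hv => ?_
  have hbv : b ≤ b * v := Nat.le_mul_of_pos_right b (pos_of_mem_totatives ha hv)
  have hpos : 0 < min t (b * v - 1) := by omega
  have hmin : ((min t (b * v) : ℕ) : ℝ) ≤ (min t (b * v - 1) : ℕ) + 1 := by
    norm_cast
    omega
  have hlog : log (min t (b * v - 1) : ℕ) ≤ log X :=
    log_le_log (mod_cast hpos) (mod_cast (min_le_left _ _).trans htX)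
  calc c * ((min t (b * v) : ℕ) : ℝ) - (c + e * (log X + 1))
      ≤ c * ((min t (b * v - 1) : ℕ) + 1) - (c + e * (log X + 1)) := by gcongr
    _ ≤ c * (min t (b * v - 1) : ℕ) - e * (log (min t (b * v - 1) : ℕ) + 1) := by
      have := mul_le_mul_of_nonneg_left hlog he
      linarith
    _ ≤ psiMod a (b * v) (min t (b * v - 1)) :=
      hpsi _ _ (Nat.Coprime.mul_left h.symm (mem_filter.1 hv).2.symm) hpos

lemma le_two_mul_sum_log_sub_theta (ha : 2 ≤ a) (hb : 2 ≤ b) (h : a.Coprime b) (hc : 0 ≤ c)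
    (he : 0 ≤ e)
    (hpsi : ∀ r x : ℕ, r.Coprime a → 0 < x → c * x - e * (log x + 1) ≤ psiMod a r x)
    (hκ₁ : κ ≤ 2 * c * #(totatives a) - 1.01775)
    (hκ₂ : κ ≤ 2 * c * (∑ v ∈ totatives a, v : ℕ) - 1.01775 * (a - 1 : ℕ)) {t : ℕ}
    (hbt : b ≤ t) (hta : t ≤ (a - 1) * b) (htX : t ≤ X) :
    κ * b - 2 * #(totatives a) * (c + e * (log X + 1)) - 86 * (log X + 1) - 81 / 25 * √X ≤
      2 * ∑ p ∈ Icc 1 t with p.Prime ∧ IsGap a b p, log p - θ t := by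
  have ht : 0 < t := by omega
  have hlog : log t ≤ log X := log_le_log (mod_cast ht) (mod_cast htX)
  have hsqrt : √t ≤ √X := sqrt_le_sqrt (mod_cast htX)
  have hmin := mul_le_mul_sum_min_sub ha (by positivity) hbt hta hκ₁ hκ₂
  have hgap := le_sum_isGap_vonMangoldt ha hb h hc he hpsi ht htX
  linarith [sum_isGap_vonMangoldt_le a b t, psi_le_add_log ht,
    psi_sub_theta_le_mul_sqrt_natCast ht]

lemma sum_mul_log_le {w : ℕ → ℝ} {X : ℕ} (hX : 2 ≤ X) (hone : 0 ≤ w 1)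
    (hw : ∀ m ≤ X, 0 ≤ ∑ n ∈ Icc 1 m, w n * log n) :
    ∑ n ∈ Icc 1 X, w n * log n ≤ log X * ∑ n ∈ Icc 1 X, w n := by
  induction X, hX using Nat.le_induction with
  | base =>
    have := mul_nonneg hone (log_nonneg one_le_two)
    simpa [sum_Icc_succ_top, add_mul, mul_comm (log 2)] using this
  | succ m hm ih =>
    have hpartial := ih fun k hk => hw k (by omega)
    have hlog : 0 < log m := log_pos (by exact_mod_cast hm)
    have hsum : 0 ≤ ∑ n ∈ Icc 1 m, w n :=
      nonneg_of_mul_nonneg_right ((hw m (by omega)).trans hpartial) hlog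
    have hle : log m ≤ log (m + 1 : ℕ) := log_le_log (by positivity) (by simp)
    rw [sum_Icc_succ_top (by omega), sum_Icc_succ_top (by omega), mul_add, mul_comm (w _)]
    gcongr
    exact hpartial.trans (by gcongr)

/-- The weight `1` for the primes that are gaps and `-1` for the other ones, increased by `2` at
`a`. If `a` is a prime, then it is the only prime below `b` that is not a gap. -/
noncomputable def gapWeight (a b n : ℕ) : ℝ :=
  2 * (if n.Prime ∧ IsGap a b n then 1 else 0) - (if n.Prime then 1 else 0) +
    2 * if n = a then 1 else 0

lemma gapWeight_nonneg_of_lt {n : ℕ} (ha : 2 ≤ a) (hn : n < b) : 0 ≤ gapWeight a b n := by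
  rw [gapWeight]
  by_cases hp : n.Prime
  · by_cases hna : n = a
    · split_ifs <;> norm_num
    · have hgap : IsGap a b n := isGap_of_lt_of_not_dvd hn fun hdvd =>
        (hp.eq_one_or_self_of_dvd a hdvd).elim (by omega) fun h => hna h.symm
      simp [hp, hgap, hna]
  · simp only [hp, false_and, if_false]
    split_ifs <;> norm_num

lemma sum_gapWeight_le (a b X : ℕ) :
    ∑ n ∈ Icc 1 X, gapWeight a b n ≤
      2 * #{p ∈ Icc 1 X | p.Prime ∧ IsGap a b p} - Nat.primeCounting X + 2 := by
  have hprime : #{p ∈ Icc 1 X | p.Prime} = Nat.primeCounting X := by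
    rw [← Nat.primesLE_eq_filter_Icc_one, Nat.primesLE_card_eq_primeCounting]
  have ha : ∑ n ∈ Icc 1 X, (if n = a then 1 else 0 : ℝ) ≤ 1 := by
    rw [sum_ite_eq']
    split_ifs <;> norm_num
  simp only [gapWeight, sum_add_distrib, sum_sub_distrib, ← mul_sum, sum_boole, hprime] at ha ⊢
  linarith

lemma le_sum_gapWeight_mul_log (a b t : ℕ) :
    2 * ∑ p ∈ Icc 1 t with p.Prime ∧ IsGap a b p, log p - θ t ≤
      ∑ n ∈ Icc 1 t, gapWeight a b n * log n := by
  have hθ : θ t = ∑ n ∈ Icc 1 t with n.Prime, log n := by rw [theta, Nat.floor_natCast]; rfl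
  rw [hθ, sum_filter, sum_filter, mul_sum, ← sum_sub_distrib]
  refine sum_le_sum fun n _ => ?_
  have := log_natCast_nonneg n
  rw [gapWeight]
  split_ifs <;> linarith

theorem primeCounting_lt_two_mul_card_isGap (ha : 3 ≤ a) (hab : a < b) (h : a.Coprime b)
    (hc : 0 ≤ c) (he : 0 ≤ e)
    (hpsi : ∀ r x : ℕ, r.Coprime a → 0 < x → c * x - e * (log x + 1) ≤ psiMod a r x)
    (hκ₁ : κ ≤ 2 * c * #(totatives a) - 1.01775)
    (hκ₂ : κ ≤ 2 * c * (∑ v ∈ totatives a, v : ℕ) - 1.01775 * (a - 1 : ℕ))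
    (hbX : b ≤ X) (hX : X ≤ (a - 1) * b)
    (hnum : 2 * #(totatives a) * (c + e * (log X + 1)) + 88 * (log X + 1) + 81 / 25 * √X < κ * b) :
    Nat.primeCounting X < 2 * #{p ∈ Icc 1 X | p.Prime ∧ IsGap a b p} := by
  have hlogX : 0 < log X := log_pos (mod_cast (by omega : 1 < X))
  have hlarge (t) (hbt : b ≤ t) (htX : t ≤ X) :
      2 * log X < ∑ n ∈ Icc 1 t, gapWeight a b n * log n := by
    refine lt_of_lt_of_le ?_ (le_sum_gapWeight_mul_log a b t)
    refine lt_of_lt_of_le ?_ (le_two_mul_sum_log_sub_theta (by omega) (by omega) h hc he hpsi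
      hκ₁ hκ₂ hbt (htX.trans hX) htX)
    linarith
  have hnonneg (t) (htX : t ≤ X) : 0 ≤ ∑ n ∈ Icc 1 t, gapWeight a b n * log n := by
    rcases le_or_gt b t with hbt | htb
    · linarith [hlarge t hbt htX]
    · exact sum_nonneg fun n hn => mul_nonneg
        (gapWeight_nonneg_of_lt (by omega) ((mem_Icc.1 hn).2.trans_lt htb)) (log_natCast_nonneg n)
  have habel := sum_mul_log_le (by omega) (gapWeight_nonneg_of_lt (by omega) (by omega)) hnonneg
  have hsum : 2 < ∑ n ∈ Icc 1 X, gapWeight a b n :=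
    lt_of_mul_lt_mul_left ((mul_comm _ _).trans_lt ((hlarge X hbX le_rfl).trans_le habel)) hlogX.le
  have := hsum.trans_le (sum_gapWeight_le a b X)
  rw [← Nat.cast_lt (α := ℝ)]
  push_cast
  linarith

end ManySmallGaps

section LargeB

lemma log_add_one_le_of_pos {x : ℝ} (hx : 0 < x) : log x + 1 ≤ x / 2 ^ 20 + 20 * 0.6931471808 := by
  have := log_le_div_add_log_sub_one hx (y := 2 ^ 20) (by positivity)
  rw [log_pow] at this
  push_cast at this
  linarith [log_two_lt_d9]

lemma sqrt_le_div_add {x : ℝ} (hx : 0 ≤ x) : √x ≤ x / 2 ^ 11 + 2 ^ 9 := by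
  nlinarith [sq_nonneg (√x - 2 ^ 10), sq_sqrt hx]

namespace ChebyshevCertificate

/-- The factor of `b` in the lower bound that a certificate of weight `20` gives for the excess of
gaps over non-gaps, each prime `p` being counted with weight `log p`. -/
def margin (c : ChebyshevCertificate) : ℚ :=
  min (c.slope / 10 * #(totatives c.modulus) - 1.01775)
    (c.slope / 10 * (∑ v ∈ totatives c.modulus, v : ℕ) - 1.01775 * (c.modulus - 1 : ℕ))

/-- The factor of `log X + 1` in the error term of that lower bound. -/
def logError (c : ChebyshevCertificate) : ℚ := c.error / 10 * #(totatives c.modulus) + 88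

/-- The margin of a certificate of weight `20` exceeds the error terms when `b ≥ B`. Here
`log X + 1` and `√X` are estimated by their tangents at `2 ^ 20`. -/
structure Suffices (c : ChebyshevCertificate) (B : ℕ) : Prop where
  three_le : 3 ≤ c.modulus
  weight_eq : c.weight = 20
  slope_nonneg : 0 ≤ c.slope
  error_lt : c.slope / 10 * #(totatives c.modulus) + c.logError * (20 * 0.6931471808) +
    81 / 25 * 2 ^ 9 <
      (c.margin - (c.modulus - 1 : ℕ) * (c.logError / 2 ^ 20 + 81 / 25 / 2 ^ 11)) * B

variable {c : ChebyshevCertificate} {b B X : ℕ}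

lemma margin_le_card (c : ChebyshevCertificate) :
    (c.margin : ℝ) ≤ c.slope / 10 * #(totatives c.modulus) - 1.01775 := by
  have h : c.margin ≤ c.slope / 10 * #(totatives c.modulus) - 1.01775 := min_le_left _ _
  have := (Rat.cast_le (K := ℝ)).2 h
  push_cast at this ⊢
  exact this

lemma margin_le_sum (c : ChebyshevCertificate) :
    (c.margin : ℝ) ≤ c.slope / 10 * (∑ v ∈ totatives c.modulus, v : ℕ) -
      1.01775 * (c.modulus - 1 : ℕ) := by
  have h : c.margin ≤ c.slope / 10 * (∑ v ∈ totatives c.modulus, v : ℕ) -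
      1.01775 * (c.modulus - 1 : ℕ) := min_le_right _ _
  have := (Rat.cast_le (K := ℝ)).2 h
  push_cast at this ⊢
  exact this

lemma Suffices.error_lt_margin_mul (hc : c.Suffices B) (hB : B ≤ b) (hX : 0 < X)
    (hXb : X ≤ (c.modulus - 1) * b) :
    2 * #(totatives c.modulus) * (c.slope / 20 + c.error / 20 * (log X + 1)) +
      88 * (log X + 1) + 81 / 25 * √X < c.margin * b := by
  have hcast := (Rat.cast_lt (K := ℝ)).2 hc.error_lt
  push_cast at hcast
  set δ : ℝ := c.margin - (c.modulus - 1 : ℕ) * (c.logError / 2 ^ 20 + 81 / 25 / 2 ^ 11) with hδ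
  have hlogError : (c.logError : ℝ) = c.error / 10 * #(totatives c.modulus) + 88 := by
    simp [logError]
  have hslope : (0 : ℝ) ≤ c.slope := mod_cast hc.slope_nonneg
  have hlogError0 : (0 : ℝ) ≤ c.logError := by rw [hlogError]; positivity
  have hδ0 : 0 ≤ δ :=
    (pos_of_mul_pos_left (lt_of_le_of_lt (by positivity) hcast) B.cast_nonneg).le
  have hXb' : (X : ℝ) ≤ (c.modulus - 1 : ℕ) * b := mod_cast hXb
  have hlog : log X + 1 ≤ (c.modulus - 1 : ℕ) * b / 2 ^ 20 + 20 * 0.6931471808 :=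
    (log_add_one_le_of_pos (mod_cast hX)).trans (by gcongr)
  have hsqrt : √X ≤ (c.modulus - 1 : ℕ) * b / 2 ^ 11 + 2 ^ 9 :=
    (sqrt_le_div_add X.cast_nonneg).trans (by gcongr)
  calc 2 * #(totatives c.modulus) * (c.slope / 20 + c.error / 20 * (log X + 1)) +
        88 * (log X + 1) + 81 / 25 * √X
      = c.slope / 10 * #(totatives c.modulus) + c.logError * (log X + 1) + 81 / 25 * √X := by
        rw [hlogError]; ring
    _ ≤ c.slope / 10 * #(totatives c.modulus) +
        c.logError * ((c.modulus - 1 : ℕ) * b / 2 ^ 20 + 20 * 0.6931471808) +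
        81 / 25 * ((c.modulus - 1 : ℕ) * b / 2 ^ 11 + 2 ^ 9) := by
      have hmul := mul_le_mul_of_nonneg_left hlog hlogError0
      linarith
    _ = c.slope / 10 * #(totatives c.modulus) + c.logError * (20 * 0.6931471808) +
        81 / 25 * 2 ^ 9 + (c.margin - δ) * b := by rw [hδ]; ring
    _ < δ * B + (c.margin - δ) * b := by gcongr
    _ ≤ δ * b + (c.margin - δ) * b := by gcongr
    _ = c.margin * b := by ring

theorem Suffices.primeCounting_S_lt (hc : c.Suffices B) (hv : c.IsValid) (hB : B ≤ b)
    (hab : c.modulus < b) (h : c.modulus.Coprime b) :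
    Nat.primeCounting (S c.modulus b) < 2 * piStar c.modulus b := by
  have ha := hc.three_le
  have hprod : c.modulus * b = (c.modulus - 1) * b + b := by
    rw [← Nat.succ_mul, Nat.succ_eq_add_one, Nat.sub_add_cancel (by omega)]
  have hbS : b ≤ S c.modulus b := by
    have := Nat.mul_le_mul_right b ha
    rw [S]
    omega
  have hS : S c.modulus b ≤ (c.modulus - 1) * b := by
    rw [S]
    omega
  have hslope : (0 : ℝ) ≤ c.slope := mod_cast hc.slope_nonneg
  refine (primeCounting_lt_two_mul_card_isGap ha hab h (c := c.slope / 20) (e := c.error / 20)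
    (by positivity) (by positivity) (fun r x hr hx => ?_) ?_ ?_ hbS hS
    (hc.error_lt_margin_mul hB (by omega) hS)).trans_le
      (Nat.mul_le_mul_left 2 (card_prime_isGap_le_piStar (by omega) h _))
  · have := hv.slope_mul_sub_le hr hx fun y _ => psi_le_mul y
    rw [hc.weight_eq] at this
    push_cast at this
    linarith
  · linarith [c.margin_le_card]
  · linarith [c.margin_le_sum]

end ChebyshevCertificate

open ChebyshevCertificate

/-- From here on the analytic argument applies. -/
def largeBound : ℕ := 3 * 2 ^ 17

theorem primeCounting_S_lt_of_largeBound_le {a b : ℕ} (ha : 3 ≤ a) (ha' : a ≤ 10)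
    (hb : largeBound ≤ b) (h : a.Coprime b) : Nat.primeCounting (S a b) < 2 * piStar a b := by
  have hlt {c : ChebyshevCertificate} (hv : c.IsValid) (hc : c.Suffices largeBound)
      (hlt : c.modulus < largeBound) (h : c.modulus.Coprime b) :=
    hc.primeCounting_S_lt hv hb (hlt.trans_le hb) h
  interval_cases a
  · exact hlt isValid_chebyshevThree (by constructor <;> decide +kernel) (by decide) h
  · exact hlt isValid_chebyshevFour (by constructor <;> decide +kernel) (by decide) h
  · exact hlt isValid_chebyshevFive (by constructor <;> decide +kernel) (by decide) h
  · exact hlt isValid_chebyshevSix (by constructor <;> decide +kernel) (by decide) h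
  · exact hlt isValid_chebyshevSeven (by constructor <;> decide +kernel) (by decide) h
  · exact hlt isValid_chebyshevEight (by constructor <;> decide +kernel) (by decide) h
  · exact hlt isValid_chebyshevNine (by constructor <;> decide +kernel) (by decide) h
  · exact hlt isValid_chebyshevTen (by constructor <;> decide +kernel) (by decide) h

end LargeB

section Sieve

open scoped Nat

/-- The number with binary digits `1` exactly at the proper multiples `2d, 3d, …, (N / d + 1)d` of
the elements `d` of the list `l`. -/
def multiplesMask (N : ℕ) (l : List ℕ) : ℕ :=
  l.foldr (fun d Q => Q ||| spacedOnes d (N / d) <<< (2 * d)) 0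

lemma testBit_multiplesMask (N : ℕ) {l : List ℕ} (hl : ∀ d ∈ l, 0 < d) (n : ℕ) :
    (multiplesMask N l).testBit n = true ↔ ∃ d ∈ l, ∃ j < N / d, d * (j + 2) = n := by
  induction l with
  | nil => simp [multiplesMask]
  | cons d l ih =>
    have hd : 0 < d := hl d List.mem_cons_self
    have hshift : (spacedOnes d (N / d) <<< (2 * d)).testBit n = true ↔
        ∃ j < N / d, d * (j + 2) = n := by
      rw [Nat.testBit_shiftLeft, Bool.and_eq_true, testBit_spacedOnes hd, decide_eq_true_iff]
      constructor
      · rintro ⟨hn, j, hj, hdj⟩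
        exact ⟨j, hj, by rw [mul_add]; omega⟩
      · rintro ⟨j, hj, rfl⟩
        rw [mul_add]
        exact ⟨by omega, j, hj, by omega⟩
    rw [multiplesMask, List.foldr_cons, Nat.testBit_or, Bool.or_eq_true, hshift, or_comm]
    simp only [List.mem_cons, exists_eq_or_imp]
    exact or_congr_right (ih fun e he => hl e (List.mem_cons_of_mem d he))

/-- The sieve decides primality below this bound. -/
def sieveBound : ℕ := 2 ^ 23

/-- Numbers among which are all primes `p` with `p ^ 2 < sieveBound`. -/
def sieveDivisors : List ℕ :=
  (List.range 2897).filter fun d => 2 ≤ d ∧ (d ≤ 43 ∨ d.Coprime 43 !)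

/-- The digits of `primeMask` below `sieveBound` mark the primes. -/
def primeMask : ℕ := (2 ^ sieveBound - 1) ^^^ (multiplesMask sieveBound sieveDivisors ||| 3)

lemma two_le_of_mem_sieveDivisors {d : ℕ} (hd : d ∈ sieveDivisors) : 2 ≤ d :=
  (of_decide_eq_true (List.mem_filter.1 hd).2).1

lemma mem_sieveDivisors_of_prime {p : ℕ} (hp : p.Prime) (hlt : p < 2897) : p ∈ sieveDivisors := by
  refine List.mem_filter.2 ⟨List.mem_range.2 hlt, decide_eq_true ⟨hp.two_le, ?_⟩⟩
  rw [hp.coprime_iff_not_dvd, hp.dvd_factorial]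
  exact le_or_gt p 43 |>.imp_right not_le.2

lemma testBit_multiplesMask_sieveDivisors {n : ℕ} (hn : 2 ≤ n) (hlt : n < sieveBound) :
    (multiplesMask sieveBound sieveDivisors).testBit n = true ↔ ¬n.Prime := by
  rw [testBit_multiplesMask _ fun d hd => zero_lt_two.trans_le (two_le_of_mem_sieveDivisors hd)]
  constructor
  · rintro ⟨d, hd, j, -, rfl⟩
    have := two_le_of_mem_sieveDivisors hd
    exact Nat.not_prime_mul (by omega) (by omega)
  · intro hn'
    have hp := Nat.minFac_prime (by omega : n ≠ 1)
    obtain ⟨k, hk⟩ := n.minFac_dvd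
    have hk1 : n.minFac ≤ k := Nat.minFac_le_div (by omega) hn' |>.trans_eq
      (Nat.div_eq_of_eq_mul_right hp.pos hk)
    have hpN : n.minFac < 2897 := by
      refine lt_of_pow_lt_pow_left₀ 2 (by omega)
        ((Nat.minFac_sq_le_self (by omega) hn').trans_lt ?_)
      exact hlt.trans_le (by norm_num [sieveBound])
    refine ⟨n.minFac, mem_sieveDivisors_of_prime hp hpN, k - 2, ?_, ?_⟩
    · have hkN : k ≤ sieveBound / n.minFac :=
        (Nat.le_div_iff_mul_le hp.pos).2 (by rw [mul_comm, ← hk]; exact hlt.le)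
      have := hp.two_le
      omega
    · rw [Nat.sub_add_cancel (hp.two_le.trans hk1), ← hk]

theorem testBit_primeMask {n : ℕ} (hn : n < sieveBound) :
    primeMask.testBit n = true ↔ n.Prime := by
  have hthree : Nat.testBit 3 n = decide (n < 2) := Nat.testBit_two_pow_sub_one 2 n
  rw [primeMask, Nat.testBit_xor, Nat.testBit_two_pow_sub_one, Nat.testBit_or, hthree,
    decide_eq_true hn, Bool.true_xor, Bool.not_eq_true', Bool.or_eq_false_iff,
    decide_eq_false_iff_not, not_lt]
  constructor
  · rintro ⟨h, hn2⟩
    by_contra hn'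
    exact Bool.false_ne_true (h.symm.trans ((testBit_multiplesMask_sieveDivisors hn2 hn).2 hn'))
  · intro hp
    refine ⟨Bool.eq_false_iff.2 fun h => ?_, hp.two_le⟩
    exact (testBit_multiplesMask_sieveDivisors hp.two_le hn).1 h hp

end Sieve

section DigitCount

/-- The number of binary digits `1` of `Q` at positions `n < x` with `n ≡ k` modulo `w`, computed by
casting out `2 ^ w - 1`; this is correct for `x < 2 ^ w - 1` and `k < w`. -/
def digitCount (Q w k x : ℕ) : ℕ :=
  ((Q &&& 2 ^ x - 1) >>> k &&& spacedOnes w (x / w + 1)) % (2 ^ w - 1)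

lemma shiftRight_land_spacedOnes {w : ℕ} (hw : 0 < w) (Q k m : ℕ) :
    Q >>> k &&& spacedOnes w m = ∑ j ∈ range m with Q.testBit (k + w * j) = true, 2 ^ (w * j) := by
  rw [← sum_image (f := (2 ^ ·)) (g := (w * ·)) fun _ _ _ _ h => Nat.eq_of_mul_eq_mul_left hw h]
  refine Nat.eq_of_testBit_eq fun i => Bool.eq_iff_iff.2 ?_
  rw [Nat.testBit_and, Bool.and_eq_true, Nat.testBit_shiftRight, testBit_spacedOnes hw,
    testBit_sum_two_pow]
  simp only [mem_image, mem_filter, mem_range]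
  constructor
  · rintro ⟨hQ, j, hj, rfl⟩
    exact ⟨j, ⟨hj, hQ⟩, rfl⟩
  · rintro ⟨j, ⟨hj, hQ⟩, rfl⟩
    exact ⟨hQ, j, hj, rfl⟩

lemma sum_two_pow_mul_modEq (w : ℕ) (s : Finset ℕ) :
    ∑ j ∈ s, 2 ^ (w * j) ≡ #s [MOD 2 ^ w - 1] := by
  have hw : 2 ^ w ≡ 1 [MOD 2 ^ w - 1] :=
    ((Nat.modEq_iff_dvd' Nat.one_le_two_pow).2 dvd_rfl).symm
  rw [card_eq_sum_ones]
  refine Nat.ModEq.sum fun j _ => ?_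
  simpa only [pow_mul, one_pow] using hw.pow j

lemma digitCount_eq_card {w k x : ℕ} (Q : ℕ) (hk : k < w) (hx : x < 2 ^ w - 1) :
    digitCount Q w k x = #{n ∈ range x | Q.testBit n = true ∧ n % w = k} := by
  have hw : 0 < w := (Nat.zero_le k).trans_lt hk
  have hcard : #{j ∈ range (x / w + 1) | (Q % 2 ^ x).testBit (k + w * j) = true} =
      #{n ∈ range x | Q.testBit n = true ∧ n % w = k} := by
    simp only [Nat.testBit_mod_two_pow, Bool.and_eq_true, decide_eq_true_iff]
    refine card_nbij' (k + w * ·) (· / w) (fun j hj => ?_) (fun n hn => ?_) (fun j _ => ?_)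
      fun n hn => ?_
    · simp only [mem_coe, mem_filter, mem_range] at hj ⊢
      exact ⟨hj.2.1, hj.2.2, by rw [Nat.add_mul_mod_self_left, Nat.mod_eq_of_lt hk]⟩
    · simp only [mem_coe, mem_filter, mem_range] at hn ⊢
      refine ⟨Nat.lt_succ_of_le (Nat.div_le_div_right hn.1.le), ?_⟩
      rw [← hn.2.2, Nat.mod_add_div]
      exact ⟨hn.1, hn.2.1⟩
    · simp only [Nat.add_mul_div_left _ _ hw, Nat.div_eq_of_lt hk, zero_add]
    · simp only [mem_coe, mem_filter] at hn
      simp only [← hn.2.2, Nat.mod_add_div]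
  rw [digitCount, Nat.and_two_pow_sub_one_eq_mod, shiftRight_land_spacedOnes hw,
    sum_two_pow_mul_modEq w _, hcard]
  exact Nat.mod_eq_of_lt (((card_filter_le _ _).trans_eq (card_range x)).trans_lt hx)

lemma sum_card_modEq_mul {a m r : ℕ} (hm : 0 < m) (hr : r < a) (s : Finset ℕ) :
    ∑ i ∈ range m, #{n ∈ s | n % (a * m) = r + a * i} = #{n ∈ s | n % a = r} := by
  have ha : 0 < a := (Nat.zero_le r).trans_lt hr
  rw [card_eq_sum_card_fiberwise (f := fun n => n / a % m) (t := range m) fun n _ =>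
    mem_coe.2 (mem_range.2 (Nat.mod_lt _ hm))]
  refine sum_congr rfl fun i _ => ?_
  rw [filter_filter]
  refine congrArg card (filter_congr fun n _ => ?_)
  rw [Nat.mod_mul]
  constructor
  · intro h
    have hmod := congrArg (· % a) h
    have hdiv := congrArg (· / a) h
    simpa [Nat.add_mul_div_left _ _ ha, Nat.mod_eq_of_lt hr, Nat.div_eq_of_lt hr,
      Nat.mod_div_self] using And.intro hmod hdiv
  · rintro ⟨h, h'⟩
    rw [h, h']

/-- The number of primes `p < x` with `p ≡ r` modulo `a`, for `r < a` and `x ≤ sieveBound`, read off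
from `primeMask`. The positions are distributed to `24 / a + 1` classes so that `24` binary digits
are available for each count. -/
def primeCountMod (a r x : ℕ) : ℕ :=
  ∑ i ∈ range (24 / a + 1), digitCount primeMask (a * (24 / a + 1)) (r + a * i) x

theorem primeCountMod_eq_card {a r x : ℕ} (hr : r < a) (hx : x ≤ sieveBound) :
    primeCountMod a r x = #{p ∈ range x | p.Prime ∧ p % a = r} := by
  have hw : 24 ≤ a * (24 / a + 1) := by
    have := Nat.div_add_mod 24 a
    have := Nat.mod_lt 24 ((Nat.zero_le r).trans_lt hr)
    rw [mul_add]
    omega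
  have hpow : x < 2 ^ (a * (24 / a + 1)) - 1 := by
    have := Nat.pow_le_pow_right zero_lt_two hw
    rw [sieveBound] at hx
    omega
  rw [primeCountMod, ← filter_filter, ← sum_card_modEq_mul (24 / a).succ_pos hr]
  refine sum_congr rfl fun i hi => ?_
  have hlt : r + a * i < a * (24 / a + 1) := by
    have : a * (i + 1) ≤ a * (24 / a + 1) := Nat.mul_le_mul_left a (mem_range.1 hi)
    rw [mul_add] at this
    omega
  rw [digitCount_eq_card _ hlt hpow, filter_filter]
  exact congrArg card (filter_congr fun n hn => and_congr_left' (testBit_primeMask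
    ((mem_range.1 hn).trans_le hx)))

end DigitCount

section Blocks

/-- The starting points of the blocks into which the values `b ≥ L` are grouped. -/
def blockStart (L : ℕ) : ℕ → ℕ
  | 0 => L
  | k + 1 => blockStart L k + blockStart L k / 16 + 1

/-- The inequality `π (S a b) < 2 π* (a, b)` for all `b` in `[B, B')` coprime to `a`, with `b`
replaced by its maximum on the left-hand side and by its minimum on the right-hand side, where only
the residue `ρ` of `b` modulo `a` is kept. -/
def BlockCheck (a B B' : ℕ) : Prop :=
  (a - 1) * B' ≤ sieveBound ∧ ∀ ρ ∈ totatives a,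
    primeCountMod 1 0 (S a (B' - 1) + 1) <
      2 * ∑ v ∈ totatives a, primeCountMod a (ρ * v % a) (B * v)

instance (a B B' : ℕ) : Decidable (BlockCheck a B B') := inferInstanceAs (Decidable (_ ∧ _))

variable {a b B B' : ℕ}

lemma sum_card_prime_modEq_le_piStar (ha : 0 < a) (h : a.Coprime b) (hB : B ≤ b) :
    ∑ v ∈ totatives a, #{p ∈ range (B * v) | p.Prime ∧ p % a = b * v % a} ≤ piStar a b := by
  refine le_trans (sum_le_sum fun v hv => ?_) ((sum_modEq_lt_le_sum_isGap h
    (f := fun p => if p.Prime then 1 else 0) (fun _ => Nat.zero_le _) (range (a * b))).trans ?_)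
  · rw [← card_filter, filter_filter]
    refine card_le_card fun p hp => ?_
    obtain ⟨hpB, hp, hmod⟩ := mem_filter.1 hp
    have hlt := (mem_range.1 hpB).trans_le (Nat.mul_le_mul_right v hB)
    have hva : v ≤ a := (mem_range.1 (mem_filter.1 hv).1).le
    refine mem_filter.2 ⟨mem_range.2 (hlt.trans_le ?_), ⟨hmod, hlt⟩, hp⟩
    rw [mul_comm]
    exact Nat.mul_le_mul_right b hva
  · rw [← card_filter, filter_filter]
    simp only [and_comm (b := Nat.Prime _)]
    exact card_prime_isGap_le_piStar ha h _

lemma BlockCheck.primeCounting_S_lt (hc : BlockCheck a B B') (ha : 2 ≤ a) (h : a.Coprime b)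
    (hB : B ≤ b) (hB' : b < B') : Nat.primeCounting (S a b) < 2 * piStar a b := by
  obtain ⟨hbound, hc⟩ := hc
  have ha0 : 0 < a := by omega
  have hρ : b % a ∈ totatives a :=
    mem_filter.2 ⟨mem_range.2 (Nat.mod_lt b ha0), by rwa [Nat.Coprime, Nat.gcd_comm, ← Nat.gcd_rec]⟩
  have hprod (x : ℕ) : S a x = (a - 1) * x - a := by
    rw [S, Nat.sub_mul, one_mul]
    omega
  have hmono (x y : ℕ) (hxy : x ≤ y) : S a x ≤ S a y := by
    rw [hprod, hprod]
    exact Nat.sub_le_sub_right (Nat.mul_le_mul_left _ hxy) a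
  have hS : S a (B' - 1) + 1 ≤ sieveBound := by
    have : (a - 1) * 1 ≤ (a - 1) * B' := Nat.mul_le_mul_left _ (by omega)
    rw [hprod, Nat.mul_sub]
    omega
  have hpi : Nat.primeCounting (S a b) ≤ primeCountMod 1 0 (S a (B' - 1) + 1) := by
    simp only [primeCountMod_eq_card one_pos hS, Nat.mod_one, and_true]
    rw [← Nat.count_eq_card_filter_range]
    exact Nat.monotone_primeCounting (hmono b (B' - 1) (by omega))
  refine hpi.trans_lt ((hc _ hρ).trans_le (Nat.mul_le_mul_left 2 (le_trans
    (sum_le_sum fun v hv => ?_) (sum_card_prime_modEq_le_piStar ha0 h hB))))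
  have hva : v < a := mem_range.1 (mem_filter.1 hv).1
  have hle : B * v ≤ sieveBound := by
    rw [mul_comm]
    exact (Nat.mul_le_mul (by omega) (hB.trans hB'.le)).trans hbound
  rw [primeCountMod_eq_card (Nat.mod_lt _ ha0) hle, Nat.mod_mul_mod]

theorem primeCounting_S_lt_of_blockCheck {L K : ℕ}
    (hc : ∀ k < K, BlockCheck a (blockStart L k) (blockStart L (k + 1))) (ha : 2 ≤ a) (hL : L ≤ b)
    (hb : b < blockStart L K) (h : a.Coprime b) :
    Nat.primeCounting (S a b) < 2 * piStar a b := by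
  induction K with
  | zero => exact absurd hL hb.not_ge
  | succ K ih =>
    rcases lt_or_ge b (blockStart L K) with hlt | hge
    · exact ih (fun k hk => hc k (hk.trans K.lt_succ_self)) hlt
    · exact (hc K K.lt_succ_self).primeCounting_S_lt ha h hge hb

/-- The least `b > a` from which on the block inequalities hold; they count no prime divisors of `a`
among the gaps, which is why `(6, 7)` and `(6, 11)` are not covered. -/
def sieveStart : ℕ → ℕ
  | 3 => 6
  | 6 => 13
  | a => a + 1

set_option maxRecDepth 10000 in
lemma blockCheck_sieveStart : ∀ a ∈ Icc 3 10, ∀ k < 171,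
    BlockCheck a (blockStart (sieveStart a) k) (blockStart (sieveStart a) (k + 1)) := by
  decide +kernel

lemma largeBound_le_blockStart : ∀ a ∈ Icc 3 10, largeBound ≤ blockStart (sieveStart a) 171 := by
  decide +kernel

theorem primeCounting_S_lt_of_sieveStart_le (ha : 3 ≤ a) (ha' : a ≤ 10) (hb : sieveStart a ≤ b)
    (h : a.Coprime b) : Nat.primeCounting (S a b) < 2 * piStar a b := by
  have hmem : a ∈ Icc 3 10 := mem_Icc.2 ⟨ha, ha'⟩
  rcases lt_or_ge b largeBound with hlt | hge
  · exact primeCounting_S_lt_of_blockCheck (blockCheck_sieveStart a hmem) (by omega) hb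
      (hlt.trans_le (largeBound_le_blockStart a hmem)) h
  · exact primeCounting_S_lt_of_largeBound_le ha ha' hge h

end Blocks

section Exceptions

variable {a b : ℕ}

lemma primeCounting_S_two_lt (hb : 7 ≤ b) (h : Nat.Coprime 2 b) :
    Nat.primeCounting (S 2 b) < 2 * piStar 2 b := by
  have hpi : Nat.primeCounting (S 2 b) ≤ #{p ∈ range b | p.Prime} := by
    rw [← Nat.count_eq_card_filter_range]
    exact Nat.count_monotone _ (by rw [S]; omega)
  have herase : {p ∈ range b | p.Prime}.erase 2 ⊆
      {p ∈ range b | p.Prime ∧ IsGap 2 b p} := by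
    intro p hp
    obtain ⟨hp2, hp⟩ := mem_erase.1 hp
    obtain ⟨hpb, hp⟩ := mem_filter.1 hp
    refine mem_filter.2 ⟨hpb, hp, isGap_of_lt_of_not_dvd (mem_range.1 hpb) fun hdvd => hp2 ?_⟩
    exact ((Nat.prime_dvd_prime_iff_eq Nat.prime_two hp).1 hdvd).symm
  have hthree : 3 ≤ #{p ∈ range b | p.Prime} :=
    (by decide : 3 = #{p ∈ range 7 | p.Prime}).trans_le
      (card_le_card (filter_subset_filter _ (range_mono hb)))
  have hle := (pred_card_le_card_erase.trans (card_le_card herase)).trans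
    (card_prime_isGap_le_piStar two_pos h (range b))
  omega

lemma card_prime_lt_sieveStart : ∀ a ∈ Icc 3 10, ∀ b ∈ Ioo a (sieveStart a), a.Coprime b →
    (a, b) ≠ (3, 5) → Nat.primeCounting (S a b) <
      2 * #{p ∈ range (a * b) | p.Prime ∧ ∃ v < a, p ≡ b * v [MOD a] ∧ p < b * v} := by
  decide +kernel

theorem primeCounting_S_lt (ha : 2 ≤ a) (ha' : a ≤ 10) (hab : a < b) (h : a.Coprime b)
    (hne : ¬((a, b) = (2, 3) ∨ (a, b) = (2, 5) ∨ (a, b) = (3, 5))) :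
    Nat.primeCounting (S a b) < 2 * piStar a b := by
  simp only [not_or] at hne
  obtain rfl | ha3 := ha.eq_or_lt
  · have hodd : b % 2 = 1 := Nat.odd_iff.1 (Nat.coprime_two_left.1 h)
    simp only [Prod.mk.injEq, true_and] at hne
    exact primeCounting_S_two_lt (by omega) h
  · rcases lt_or_ge b (sieveStart a) with hb | hb
    · rw [piStar_eq_card (by omega) h]
      exact card_prime_lt_sieveStart a (mem_Icc.2 ⟨ha3, ha'⟩) b (mem_Ioo.2 ⟨hab, hb⟩) h hne.2.2
    · exact primeCounting_S_lt_of_sieveStart_le ha3 ha' hb h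

lemma piStar_one_left (b : ℕ) : piStar 1 b = 0 := by
  simp [piStar_eq_card one_pos (Nat.coprime_one_left b)]

lemma S_one_left (b : ℕ) : S 1 b = 0 := by
  rw [S]
  omega

lemma primeCounting_S_eq (hab : a = 1 ∨ (a, b) = (2, 3) ∨ (a, b) = (2, 5) ∨ (a, b) = (3, 5)) :
    Nat.primeCounting (S a b) = 2 * piStar a b := by
  simp only [Prod.mk.injEq] at hab
  obtain rfl | ⟨rfl, rfl⟩ | ⟨rfl, rfl⟩ | ⟨rfl, rfl⟩ := hab
  · rw [S_one_left, piStar_one_left, Nat.primeCounting_zero]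
  all_goals
    rw [piStar_eq_card (by norm_num) (by norm_num)]
    decide +kernel

end Exceptions

theorem piStar_ge_half_pi_small_a (a b : ℕ) (ha : 1 ≤ a) (ha' : a ≤ 10)
    (hab : a < b) (h : Nat.Coprime a b) :
    (1 / 2 : ℝ) * (Nat.primeCounting (S a b) : ℝ) ≤ (piStar a b : ℝ) ∧
      ((piStar a b : ℝ) = (1 / 2 : ℝ) * (Nat.primeCounting (S a b) : ℝ) ↔
        a = 1 ∨ (a, b) = (2, 3) ∨ (a, b) = (2, 5) ∨ (a, b) = (3, 5)) := by
  by_cases hex : a = 1 ∨ (a, b) = (2, 3) ∨ (a, b) = (2, 5) ∨ (a, b) = (3, 5)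
  · have heq : (Nat.primeCounting (S a b) : ℝ) = 2 * piStar a b := by
      exact_mod_cast primeCounting_S_eq hex
    exact ⟨by linarith, fun _ => hex, fun _ => by linarith⟩
  · obtain ⟨ha1, hne⟩ := not_or.1 hex
    have hlt : (Nat.primeCounting (S a b) : ℝ) < 2 * piStar a b := by
      exact_mod_cast primeCounting_S_lt (by omega) ha' hab h hne
    exact ⟨by linarith, fun heq => by linarith, fun hex' => absurd hex' hex⟩
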